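/- For n ≥ 2, the invariant ring F_q[V ⊕ V*]^{U_n}, i.e. the subalgebra of F_q[x_1,…,x_n,y_1,…,y_n] of elements fixed by every element of U_n, equals the F_q-subalgebra generated by the 4n−3 elements f_1,…,f_n, f_1*,…,f_n*, and u_j for 2−n ≤ j ≤ n−2. -/

import Mathlib

open MvPolynomial Matrix

variable (F : Type) [Field F] [Fintype F] (n : ℕ)

/-- `fX F n k` is the orbit product `f_k` (1-indexed, meaningful for `1 ≤ k ≤ n`). -/
noncomputable def fX (k : ℕ) : MvPolynomial (Fin n ⊕ Fin n) F :=
  if h : 1 ≤ k ∧ k ≤ n then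
    ∏ α : Fin (k - 1) → F,
      (X (Sum.inl ⟨k - 1, by omega⟩) +
        ∑ j : Fin (k - 1), C (α j) * X (Sum.inl ⟨j.val, by omega⟩))
  else 0

/-- `fY F n k` is `f_k^*` (1-indexed), the orbit product of `y_{n+1-k}`. -/
noncomputable def fY (k : ℕ) : MvPolynomial (Fin n ⊕ Fin n) F :=
  if h : 1 ≤ k ∧ k ≤ n then
    ∏ α : Fin (k - 1) → F,
      (X (Sum.inr ⟨n - k, by omega⟩) +
        ∑ j : Fin (k - 1), C (α j) * X (Sum.inr ⟨n - 1 - j.val, by omega⟩))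
  else 0

/-- `uInv F n j` is the invariant `u_j`, for `j : ℤ`. -/
noncomputable def uInv (j : ℤ) : MvPolynomial (Fin n ⊕ Fin n) F :=
  if 0 ≤ j then ∑ k : Fin n, X (Sum.inl k) ^ (Fintype.card F) ^ j.toNat * X (Sum.inr k)
  else ∑ k : Fin n, X (Sum.inl k) * X (Sum.inr k) ^ (Fintype.card F) ^ (-j).toNat

/-- `cX F n s t` is the Dickson-type invariant `c_{s,t}` (in the `x`-variables):
the sum over strictly increasing sequences `1 ≤ j_1 < ⋯ < j_{s-t} ≤ s` (encoded as
strictly monotone functions `Fin (s-t) → Fin s`) of `∏_l f_{j_l}^{(q-1)·q^{t+l-j_l}}`. -/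
noncomputable def cX (s t : ℕ) : MvPolynomial (Fin n ⊕ Fin n) F :=
  if s ≤ n then
    ∑ g ∈ Finset.univ.filter (fun g : Fin (s - t) → Fin s => ∀ a b : Fin (s - t), a < b → g a < g b),
      ∏ l : Fin (s - t),
        fX F n ((g l).val + 1) ^ ((Fintype.card F - 1) * (Fintype.card F) ^ (t + l.val - (g l).val))
  else 0

/-- `cY F n s t` is `c_{s,t}^*` (in the `y`-variables). -/
noncomputable def cY (s t : ℕ) : MvPolynomial (Fin n ⊕ Fin n) F :=
  if s ≤ n then
    ∑ g ∈ Finset.univ.filter (fun g : Fin (s - t) → Fin s => ∀ a b : Fin (s - t), a < b → g a < g b),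
      ∏ l : Fin (s - t),
        fY F n ((g l).val + 1) ^ ((Fintype.card F - 1) * (Fintype.card F) ^ (t + l.val - (g l).val))
  else 0

/-- The action of `σ ∈ GL_n(F)` on `F[V ⊕ V*] = F[x_1,…,x_n,y_1,…,y_n]`:
`σ` acts naturally on the span of the `x_j` (identified with `V`, so `σ·x_j = ∑_i σ_{ij} x_i`)
and by `σ·λ = λ ∘ σ⁻¹` on the span of the `y_j` (so `σ·y_j = ∑_i (σ⁻¹)_{ji} y_i`). -/
noncomputable def gact (σ : GL (Fin n) F) :
    MvPolynomial (Fin n ⊕ Fin n) F →ₐ[F] MvPolynomial (Fin n ⊕ Fin n) F :=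
  aeval (Sum.elim
    (fun j => ∑ i : Fin n, C ((σ : Matrix (Fin n) (Fin n) F) i j) * X (Sum.inl i))
    (fun j => ∑ i : Fin n,
      C (((σ⁻¹ : GL (Fin n) F) : Matrix (Fin n) (Fin n) F) j i) * X (Sum.inr i)))

/-- `σ` belongs to `U_n`: upper unipotent. -/
def isUpperUnipotent (σ : GL (Fin n) F) : Prop :=
  (∀ i : Fin n, (σ : Matrix (Fin n) (Fin n) F) i i = 1) ∧
    ∀ i j : Fin n, j < i → (σ : Matrix (Fin n) (Fin n) F) i j = 0

/-- `σ` belongs to `B_n`: upper triangular (invertibility is part of `GL`). -/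
def isUpperTriangular (σ : GL (Fin n) F) : Prop :=
  ∀ i j : Fin n, j < i → (σ : Matrix (Fin n) (Fin n) F) i j = 0


/-!
Write `L_s` for the `q`-linearised polynomial with root space `span(x_1, …, x_s)`, so that
`f_{s+1} = L_s(x_{s+1})`, and `L_t^*` for the analogue with `y_n, …, y_{n+1-t}`. The pairing
`∑_k L_s(x_k) L_t^*(y_k)` equals `f_{s+1} f_{t+1}^*` if `s + t + 1 = n` and vanishes if
`s + t + 1 > n`. Expanded in the `u_j`, these identities express high powers of the `u_j` through
lower ones, so the algebra `A` on the right-hand side is spanned over `F[f, f^*]` by reduced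
monomials in the `u_j`. By a degree count these remain independent over the image of `F[f, f^*]`
modulo `x_1`, so `A` contains every `b` with `x_1 b ∈ A`. It therefore suffices to work after
inverting `x_1`: transvections adding multiples of `x_1` then eliminate `x_2, …, x_n` in favour of
`x_i^q - x_1^{q-1} x_i`, and the coefficients with respect to `x_1` and `u_0` of what remains are
invariants of `U_{n-1}`.
-/

/-! ### Subspace polynomials -/

section SubspacePoly

variable {K R S : Type*} [Field K] [Fintype K] [CommRing R] [Algebra K R] [CommRing S] [Algebra K S]

local notation "q" => Fintype.card K

theorem frobeniusAlgHom_pow_apply (k : ℕ) (a : R) :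
    (FiniteField.frobeniusAlgHom K R ^ k) a = a ^ q ^ k := by
  rw [AlgHom.coe_pow, FiniteField.coe_frobeniusAlgHom, pow_iterate]

variable (K) in
/-- The `q`-linearised polynomial `L_s(T) = ∏_v (T + v)`, where `v` runs over the span of
`z 0, …, z (s - 1)` (with multiplicity), as a `K`-linear endomorphism of the ring containing `T`.
It is defined by the recursion `L_{s+1}(T) = L_s(T)^q - L_s(z_s)^{q-1} L_s(T)`;
`subspacePoly_eq_prod` is the product formula. -/
noncomputable def subspacePoly (z : ℕ → R) : ℕ → R →ₗ[K] R
  | 0 => LinearMap.id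
  | s + 1 => (FiniteField.frobeniusAlgHom K R).toLinearMap ∘ₗ subspacePoly z s -
      LinearMap.mulLeft K (subspacePoly z s (z s) ^ (q - 1)) ∘ₗ subspacePoly z s

@[simp]
theorem subspacePoly_zero (z : ℕ → R) (T : R) : subspacePoly K z 0 T = T := rfl

theorem subspacePoly_succ (z : ℕ → R) (s : ℕ) (T : R) :
    subspacePoly K z (s + 1) T =
      subspacePoly K z s T ^ q -
        subspacePoly K z s (z s) ^ (q - 1) * subspacePoly K z s T := by
  simp [subspacePoly]

theorem subspacePoly_one (z : ℕ → R) (T : R) :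
    subspacePoly K z 1 T = T ^ q - z 0 ^ (q - 1) * T :=
  subspacePoly_succ z 0 T

theorem subspacePoly_eq_zero_of_lt (z : ℕ → R) {s j : ℕ} (hj : j < s) :
    subspacePoly K z s (z j) = 0 := by
  induction s with
  | zero => omega
  | succ s ih =>
    rw [subspacePoly_succ]
    rcases Nat.lt_succ_iff_lt_or_eq.mp hj with hjs | rfl
    · rw [ih hjs, zero_pow Fintype.card_ne_zero, mul_zero, sub_zero]
    · rw [← pow_succ, Nat.sub_add_cancel Fintype.card_pos, sub_self]

theorem subspacePoly_mem (A : Subalgebra K R) {z : ℕ → R} (hz : ∀ i, z i ∈ A) (s : ℕ) {T : R}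
    (hT : T ∈ A) : subspacePoly K z s T ∈ A := by
  induction s generalizing T with
  | zero => exact hT
  | succ s ih =>
    rw [subspacePoly_succ]
    exact sub_mem (pow_mem (ih hT) _) (mul_mem (pow_mem (ih (hz s)) _) (ih hT))

theorem map_subspacePoly (φ : R →ₐ[K] S) (z : ℕ → R) (s : ℕ) (T : R) :
    φ (subspacePoly K z s T) = subspacePoly K (fun i => φ (z i)) s (φ T) := by
  induction s generalizing T with
  | zero => rfl
  | succ s ih => simp only [subspacePoly_succ, map_sub, map_mul, map_pow, ih]

theorem subspacePoly_congr {z z' : ℕ → R} {s : ℕ} (h : ∀ i < s, z i = z' i) :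
    subspacePoly K z s = subspacePoly K z' s := by
  induction s with
  | zero => rfl
  | succ s ih =>
    simp only [subspacePoly, ih fun i hi => h i (hi.trans (Nat.lt_succ_self s)),
      h s (Nat.lt_succ_self s)]

theorem map_subspacePoly_self_of_sub_mem_span (φ : R →ₐ[K] R) (z : ℕ → R)
    (hφ : ∀ i, φ (z i) - z i ∈ Submodule.span K (z '' Set.Iio i)) (s : ℕ) :
    φ (subspacePoly K z s (z s)) = subspacePoly K z s (z s) := by
  have happly (s : ℕ) : subspacePoly K z s (φ (z s)) = subspacePoly K z s (z s) := by
    have hker : Submodule.span K (z '' Set.Iio s) ≤ LinearMap.ker (subspacePoly K z s) := by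
      rw [Submodule.span_le]
      rintro _ ⟨j, hj, rfl⟩
      exact subspacePoly_eq_zero_of_lt z hj
    rw [← sub_eq_zero, ← map_sub]
    exact hker (hφ s)
  have hcomp (s : ℕ) : subspacePoly K (fun i => φ (z i)) s = subspacePoly K z s := by
    induction s with
    | zero => rfl
    | succ s ih => simp only [subspacePoly, ih, happly]
  rw [map_subspacePoly, hcomp, happly]

theorem subspacePoly_succ_eq_comp (z : ℕ → R) (s : ℕ) (T : R) :
    subspacePoly K z (s + 1) T =
      subspacePoly K (fun i => subspacePoly K z 1 (z (i + 1))) s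
        (subspacePoly K z 1 T) := by
  induction s generalizing T with
  | zero => rfl
  | succ s ih => rw [subspacePoly_succ, ih, ih, ← subspacePoly_succ]

theorem subspacePoly_pow_card (z : ℕ → R) (s : ℕ) (T : R) :
    subspacePoly K (fun i => z i ^ q) s (T ^ q) = subspacePoly K z s T ^ q :=
  (map_subspacePoly (FiniteField.frobeniusAlgHom K R) z s T).symm

theorem subspacePoly_succ_of_zero (z : ℕ → R) (hz : z 0 = 0) (s : ℕ) (T : R) :
    subspacePoly K z (s + 1) T = subspacePoly K (fun i => z (i + 1)) s T ^ q := by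
  have hq : q - 1 ≠ 0 := Nat.sub_ne_zero_of_lt Fintype.one_lt_card
  have hone (U : R) : subspacePoly K z 1 U = U ^ q := by
    rw [subspacePoly_one, hz, zero_pow hq, zero_mul, sub_zero]
  rw [subspacePoly_succ_eq_comp, ← subspacePoly_pow_card]
  simp only [hone]

theorem exists_subspacePoly_eq_sum (A : Subalgebra K R) (z : ℕ → R) (s : ℕ)
    (hz : ∀ i < s, subspacePoly K z i (z i) ∈ A) :
    ∃ c : ℕ → R, (∀ i, c i ∈ A) ∧ c s = 1 ∧ (∀ i, s < i → c i = 0) ∧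
      ∀ T, subspacePoly K z s T = ∑ i ∈ Finset.range (s + 1), c i * T ^ q ^ i := by
  induction s with
  | zero => exact ⟨Pi.single 0 1, fun i => by
      obtain rfl | hi := eq_or_ne i 0 <;> simp [*], by simp, fun i hi => by simp [hi.ne'], by simp⟩
  | succ s ih =>
    obtain ⟨c, hcA, hcs, hc0, hc⟩ := ih fun i hi => hz i (hi.trans (Nat.lt_succ_self s))
    set a := subspacePoly K z s (z s) ^ (q - 1) with ha
    have haA : a ∈ A := pow_mem (hz s (Nat.lt_succ_self s)) _
    have hfrob (T : R) : (∑ i ∈ Finset.range (s + 1), c i * T ^ q ^ i) ^ q =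
        ∑ i ∈ Finset.range (s + 1), c i ^ q * T ^ q ^ (i + 1) := by
      rw [← FiniteField.frobeniusAlgHom_apply K, map_sum]
      simp only [FiniteField.frobeniusAlgHom_apply, mul_pow, ← pow_mul, ← pow_succ]
    refine ⟨fun i => (if i = 0 then 0 else c (i - 1) ^ q) - a * c i,
      fun i => ?_, ?_, fun i hi => ?_, fun T => ?_⟩
    · refine sub_mem ?_ (mul_mem haA (hcA i))
      split_ifs
      exacts [zero_mem A, pow_mem (hcA _) q]
    · simp [hcs, hc0 (s + 1) (Nat.lt_succ_self s)]
    · simp [hc0 i (by omega), hc0 (i - 1) (by omega), show i ≠ 0 by omega]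
    · have hlast : ∑ i ∈ Finset.range (s + 1), c i * T ^ q ^ i =
          ∑ i ∈ Finset.range (s + 2), c i * T ^ q ^ i := by
        rw [Finset.sum_range_succ _ (s + 1), hc0 (s + 1) (Nat.lt_succ_self s), zero_mul, add_zero]
      rw [subspacePoly_succ, ← ha, hc, hfrob, hlast, Finset.mul_sum]
      simp only [sub_mul, Finset.sum_sub_distrib, mul_assoc]
      congr 1
      simp [Finset.sum_range_succ' _ (s + 1)]

theorem prod_add_algebraMap_mul [IsDomain R] (y z : R) :
    ∏ a : K, (y + algebraMap K R a * z) = y ^ q - z ^ (q - 1) * y := by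
  rcases eq_or_ne z 0 with rfl | hz
  · simp [zero_pow (Nat.sub_ne_zero_of_lt Fintype.one_lt_card)]
  have hmonic : (Polynomial.X ^ q - Polynomial.X : Polynomial K).Monic :=
    Polynomial.monic_X_pow_sub (by simpa using Fintype.one_lt_card (α := K))
  have hfactor := Polynomial.prod_multiset_X_sub_C_of_monic_of_roots_card_eq hmonic (by
    rw [FiniteField.roots_X_pow_card_sub_X,
      FiniteField.X_pow_card_sub_X_natDegree_eq K Fintype.one_lt_card]
    rfl)
  rw [FiniteField.roots_X_pow_card_sub_X] at hfactor
  have hprod (t : FractionRing R) : ∏ a : K, (t + algebraMap K (FractionRing R) a) = t ^ q - t := by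
    rw [← Equiv.prod_comp (Equiv.neg K)]
    simpa [map_prod, sub_eq_add_neg] using congrArg (Polynomial.aeval t) hfactor
  apply IsFractionRing.injective R (FractionRing R)
  simp only [map_prod, map_sub, map_mul, map_add, map_pow, ← IsScalarTower.algebraMap_apply]
  set y' := algebraMap R (FractionRing R) y
  set z' := algebraMap R (FractionRing R) z
  have hz' : z' ≠ 0 := by simpa [z'] using hz
  calc ∏ a : K, (y' + algebraMap K (FractionRing R) a * z')
      = ∏ a : K, z' * (y' / z' + algebraMap K (FractionRing R) a) :=
        Finset.prod_congr rfl fun a _ => by field_simp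
    _ = z' ^ q * ((y' / z') ^ q - y' / z') := by
        rw [Finset.prod_mul_distrib, hprod, Finset.prod_const, Finset.card_univ]
    _ = y' ^ q - z' ^ (q - 1) * y' := by
        rw [mul_sub, ← mul_pow, mul_div_cancel₀ _ hz', ← pow_sub_one_mul Fintype.card_ne_zero z',
          mul_assoc, mul_div_cancel₀ _ hz']

theorem subspacePoly_eq_prod [IsDomain R] (z : ℕ → R) (s : ℕ) (T : R) :
    subspacePoly K z s T =
      ∏ α : Fin s → K, (T + ∑ j : Fin s, algebraMap K R (α j) * z j) := by
  induction s generalizing T with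
  | zero => simp
  | succ s ih =>
    rw [subspacePoly_succ, ← prod_add_algebraMap_mul,
      ← (Fin.snocEquiv fun _ : Fin (s + 1) => K).prod_comp, Fintype.prod_prod_type]
    refine Finset.prod_congr rfl fun a _ => ?_
    rw [← Algebra.smul_def, ← map_smul, ← map_add, ih]
    refine Finset.prod_congr rfl fun α _ => ?_
    simp [Fin.sum_univ_castSucc, Fin.snocEquiv, Algebra.smul_def, add_assoc, add_comm]

end SubspacePoly
/-! ### Orbit polynomials and Frobenius pairings -/

section Pairing

local notation "q" => Fintype.card F

/-- The polynomial ring `F[V ⊕ V*]`; `Sum.inl i` indexes `x_{i+1}` and `Sum.inr i` indexes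
`y_{i+1}`. -/
abbrev CoordRing := MvPolynomial (Fin n ⊕ Fin n) F

/-- The sequence `x_1, …, x_n, 0, 0, …`. -/
noncomputable def xVar (i : ℕ) : CoordRing F n :=
  if h : i < n then X (Sum.inl ⟨i, h⟩) else 0

/-- The sequence `y_n, …, y_1, 0, 0, …`: upper unipotent matrices act on `V*` by lower triangular
ones, so the flag of `V*` preserved by `U_n` is spanned by the `y`-variables in reverse order. -/
noncomputable def yVar (i : ℕ) : CoordRing F n :=
  if h : i < n then X (Sum.inr (Fin.rev ⟨i, h⟩)) else 0

/-- The orbit product `f_{i+1}` of `x_{i+1}`, and `0` for `n ≤ i`. -/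
noncomputable def orbitX (i : ℕ) : CoordRing F n := subspacePoly F (xVar F n) i (xVar F n i)

/-- The orbit product `f_{i+1}^*` of `y_{n-i}`, and `0` for `n ≤ i`. -/
noncomputable def orbitY (i : ℕ) : CoordRing F n := subspacePoly F (yVar F n) i (yVar F n i)

/-- The pairing `∑_k x_k^{q^i} y_k^{q^j}`, a `q`-power of `u_{i-j}`
(`frobPairing_eq_uInv_pow`). -/
noncomputable def frobPairing (i j : ℕ) : CoordRing F n :=
  ∑ k : Fin n, X (Sum.inl k) ^ q ^ i * X (Sum.inr k) ^ q ^ j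

omit [Fintype F] in
theorem xVar_val (k : Fin n) : xVar F n k = X (Sum.inl k) := dif_pos k.2

omit [Fintype F] in
theorem yVar_rev (k : Fin n) : yVar F n k.rev = X (Sum.inr k) := by
  simp only [yVar, Fin.is_lt, dif_pos, Fin.eta, Fin.rev_rev]

omit [Fintype F] in
theorem yVar_val (k : Fin n) : yVar F n k = X (Sum.inr k.rev) := by
  rw [← yVar_rev, Fin.rev_rev]

theorem fX_succ {i : ℕ} (hi : i < n) : fX F n (i + 1) = orbitX F n i := by
  rw [fX, dif_pos ⟨by omega, by omega⟩, orbitX, subspacePoly_eq_prod]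
  refine Finset.prod_congr rfl fun α _ => congrArg₂ _ (xVar_val F n ⟨i, hi⟩).symm ?_
  exact Finset.sum_congr rfl fun j _ => congrArg _ (xVar_val F n ⟨j, j.2.trans hi⟩).symm

theorem fY_succ {i : ℕ} (hi : i < n) : fY F n (i + 1) = orbitY F n i := by
  rw [fY, dif_pos ⟨by omega, by omega⟩, orbitY, subspacePoly_eq_prod]
  refine Finset.prod_congr rfl fun α _ => congrArg₂ _ (yVar_val F n ⟨i, hi⟩).symm ?_
  refine Finset.sum_congr rfl fun j _ => congrArg _ ?_
  refine .trans ?_ (yVar_val F n ⟨j, j.2.trans hi⟩).symm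
  exact congrArg X (congrArg Sum.inr (Fin.ext (by simp only [Fin.val_rev]; omega)))

theorem uInv_natCast (j : ℕ) : uInv F n j = frobPairing F n j 0 := by
  simp [uInv, frobPairing]

theorem uInv_neg_natCast (j : ℕ) : uInv F n (-j) = frobPairing F n 0 j := by
  rcases j.eq_zero_or_pos with rfl | hj
  · simp [uInv, frobPairing]
  · simp [uInv, frobPairing, hj.ne']

theorem frobPairing_add (i j k : ℕ) :
    frobPairing F n (i + k) (j + k) = frobPairing F n i j ^ q ^ k := by
  rw [frobPairing, frobPairing, ← frobeniusAlgHom_pow_apply, map_sum]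
  simp only [frobeniusAlgHom_pow_apply, mul_pow, ← pow_mul, pow_add]

theorem frobPairing_eq_uInv_pow (i j : ℕ) :
    frobPairing F n i j = uInv F n (i - j) ^ q ^ min i j := by
  rcases le_total i j with h | h <;> obtain ⟨k, rfl⟩ := Nat.exists_eq_add_of_le h
  · rw [min_eq_left h, show (i : ℤ) - (i + k : ℕ) = -k by push_cast; ring, uInv_neg_natCast,
      ← frobPairing_add, zero_add, add_comm]
  · rw [min_eq_right h, show ((j + k : ℕ) : ℤ) - j = k by push_cast; ring, uInv_natCast,
      ← frobPairing_add, zero_add, add_comm]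

-- In each summand `L_s` kills `x_k` for `k < s` and `L_t` kills the first `t` of the reversed `y`s.
theorem sum_subspacePoly_mul_subspacePoly (s t : ℕ) (h : n ≤ s + t + 1) :
    ∑ k : Fin n, subspacePoly F (xVar F n) s (X (Sum.inl k)) *
        subspacePoly F (yVar F n) t (X (Sum.inr k)) =
      if s + t + 1 = n then orbitX F n s * orbitY F n t else 0 := by
  have hzero (k : Fin n) (hk : (k : ℕ) < s ∨ (k.rev : ℕ) < t) :
      subspacePoly F (xVar F n) s (X (Sum.inl k)) *
        subspacePoly F (yVar F n) t (X (Sum.inr k)) = 0 := by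
    rw [← xVar_val, ← yVar_rev]
    rcases hk with hk | hk <;> rw [subspacePoly_eq_zero_of_lt _ hk]
    exacts [zero_mul _, mul_zero _]
  simp only [Fin.val_rev] at hzero
  split_ifs with hn
  · let k : Fin n := ⟨s, by omega⟩
    have hk : (k.rev : ℕ) = t := by simp only [Fin.val_rev, k]; omega
    rw [Finset.sum_eq_single_of_mem k (Finset.mem_univ k) fun l _ hl => hzero l ?_,
      ← xVar_val, ← yVar_rev, hk, orbitX, orbitY]
    have := Fin.val_ne_of_ne hl
    dsimp only [k] at this
    omega
  · exact Finset.sum_eq_zero fun l _ => hzero l (by omega)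

end Pairing
/-! ### Spanning by box monomials -/

section BoxMonomial

variable {ι P S : Type*} [Fintype ι] [CommRing P] [CommRing S] [Algebra P S]

/-- The monomial `∏ i, u i ^ e i` whose exponent vector lies in the box `∏ i, [0, N i)`. -/
def boxMonomial (N : ι → ℕ) (u : ι → S) (e : ∀ i, Fin (N i)) : S := ∏ i, u i ^ (e i : ℕ)

-- Weighted rewriting: each use of a relation lowers the weight `∑ i, e i * w i` of a monomial.
theorem prod_pow_mem_span_boxMonomial (u : ι → S) (N w : ι → ℕ)
    (h : ∀ i, u i ^ N i ∈ Submodule.span P {y | ∃ l r, r * w l < N i * w i ∧ y = u l ^ r})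
    (e : ι → ℕ) :
    ∏ i, u i ^ e i ∈ Submodule.span P (Set.range (boxMonomial N u)) := by
  classical
  induction hk : ∑ i, e i * w i using Nat.strong_induction_on generalizing e with
  | _ k ih =>
    by_cases hbox : ∀ i, e i < N i
    · exact Submodule.subset_span ⟨fun i => ⟨e i, hbox i⟩, rfl⟩
    push Not at hbox
    obtain ⟨i, hi⟩ := hbox
    obtain ⟨e', rfl⟩ : ∃ e', e = e' + Pi.single i (N i) :=
      ⟨e - Pi.single i (N i), (tsub_add_cancel_of_le (by
        intro j; obtain rfl | hj := eq_or_ne j i <;> simp [*])).symm⟩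
    have hprod (l : ι) (r : ℕ) :
        ∏ j, u j ^ (e' + Pi.single l r : ι → ℕ) j = u l ^ r * ∏ j, u j ^ e' j := by
      simp only [Pi.add_apply, pow_add, Finset.prod_mul_distrib]
      rw [mul_comm, Finset.prod_eq_single l (by simp +contextual) (by simp), Pi.single_eq_same]
    have hweight (l : ι) (r : ℕ) :
        ∑ j, (e' + Pi.single l r : ι → ℕ) j * w j = ∑ j, e' j * w j + r * w l := by
      simp [add_mul, Finset.sum_add_distrib, Pi.single_apply, ite_mul]
    have hle : Submodule.span P {y | ∃ l r, r * w l < N i * w i ∧ y = u l ^ r} ≤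
        (Submodule.span P (Set.range (boxMonomial N u))).comap
          (LinearMap.mulRight P (∏ j, u j ^ e' j)) := by
      refine Submodule.span_le.mpr ?_
      rintro _ ⟨l, r, hlt, rfl⟩
      rw [SetLike.mem_coe, Submodule.mem_comap, LinearMap.mulRight_apply, ← hprod]
      exact ih _ (by rw [← hk, hweight, hweight]; omega) _ rfl
    rw [hprod]
    exact hle (h i)

theorem adjoin_range_le_span_boxMonomial (u : ι → S) (N w : ι → ℕ)
    (h : ∀ i, u i ^ N i ∈ Submodule.span P {y | ∃ l r, r * w l < N i * w i ∧ y = u l ^ r}) :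
    Subalgebra.toSubmodule (Algebra.adjoin P (Set.range u)) ≤
      Submodule.span P (Set.range (boxMonomial N u)) := by
  rw [Algebra.adjoin_eq_span, Submodule.span_le]
  intro y hy
  obtain ⟨e, rfl⟩ := Submonoid.exists_of_mem_closure_range u y hy
  exact prod_pow_mem_span_boxMonomial u N w h e

end BoxMonomial

section GeneratedAlgebra

local notation "q" => Fintype.card F

/-- The family `f_1, …, f_n, f_1^*, …, f_n^*`. -/
noncomputable def orbitPoly : Fin n ⊕ Fin n → CoordRing F n :=
  Sum.elim (fun i => orbitX F n i) (fun i => orbitY F n i)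

/-- The subalgebra generated by `f_1, …, f_n, f_1^*, …, f_n^*`. -/
noncomputable def orbitAlgebra : Subalgebra F (CoordRing F n) :=
  Algebra.adjoin F (Set.range (orbitPoly F n))

/-- The indices `j` of the generators `u_j`. -/
abbrev uIndex : Set ℤ := Set.Icc (2 - (n : ℤ)) ((n : ℤ) - 2)

/-- The exponent `q ^ ⌊(n - |j|) / 2⌋` for which the power of `u_j` becomes reducible, by the
relation `uInv_pow_uBound_mem_span`. -/
def uBound (j : uIndex n) : ℕ := q ^ ((n - j.val.natAbs) / 2)

/-- The subalgebra generated by `f_1, …, f_n, f_1^*, …, f_n^*` and `u_{2-n}, …, u_{n-2}`. -/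
noncomputable def generatedAlgebra : Subalgebra F (CoordRing F n) :=
  Algebra.adjoin F
    ((Set.range fun i : Fin n => fX F n (i.val + 1)) ∪
      (Set.range fun i : Fin n => fY F n (i.val + 1)) ∪
      (uInv F n '' uIndex n))

theorem orbitX_mem_orbitAlgebra (i : ℕ) : orbitX F n i ∈ orbitAlgebra F n := by
  by_cases hi : i < n
  · exact Algebra.subset_adjoin ⟨Sum.inl ⟨i, hi⟩, rfl⟩
  · simp [orbitX, xVar, hi]

theorem orbitY_mem_orbitAlgebra (i : ℕ) : orbitY F n i ∈ orbitAlgebra F n := by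
  by_cases hi : i < n
  · exact Algebra.subset_adjoin ⟨Sum.inr ⟨i, hi⟩, rfl⟩
  · simp [orbitY, yVar, hi]

theorem exists_sum_mul_frobPairing_eq (A : Subalgebra F (CoordRing F n)) (s t : ℕ)
    (hX : ∀ i < s, orbitX F n i ∈ A) (hY : ∀ i < t, orbitY F n i ∈ A) :
    ∃ c d : ℕ → CoordRing F n, (∀ i, c i ∈ A) ∧ (∀ i, d i ∈ A) ∧ c s = 1 ∧ d t = 1 ∧
      ∑ p ∈ Finset.range (s + 1) ×ˢ Finset.range (t + 1),
          c p.1 * d p.2 * frobPairing F n p.1 p.2 =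
        ∑ k : Fin n, subspacePoly F (xVar F n) s (X (Sum.inl k)) *
          subspacePoly F (yVar F n) t (X (Sum.inr k)) := by
  obtain ⟨c, hcA, hcs, -, hc⟩ := exists_subspacePoly_eq_sum A (xVar F n) s hX
  obtain ⟨d, hdA, hdt, -, hd⟩ := exists_subspacePoly_eq_sum A (yVar F n) t hY
  refine ⟨c, d, hcA, hdA, hcs, hdt, ?_⟩
  simp only [hc, hd, frobPairing, Finset.mul_sum (ι := Fin n)]
  rw [Finset.sum_comm]
  refine Finset.sum_congr rfl fun _ _ => ?_
  rw [Finset.sum_mul_sum, Finset.sum_product]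
  exact Finset.sum_congr rfl fun _ _ => Finset.sum_congr rfl fun _ _ => by ring

-- By induction on `s + t`: solve the relation above for its leading term.
theorem frobPairing_mem_span (s t : ℕ) :
    frobPairing F n s t ∈ Submodule.span (orbitAlgebra F n)
      (insert 1 {b | ∃ i ≤ s, ∃ j ≤ t, i + j + 2 ≤ n ∧ b = frobPairing F n i j}) := by
  induction hk : s + t using Nat.strong_induction_on generalizing s t with
  | _ k ih =>
    by_cases hst : s + t + 2 ≤ n
    · exact Submodule.subset_span (Or.inr ⟨s, le_rfl, t, le_rfl, hst, rfl⟩)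
    set M := Submodule.span (orbitAlgebra F n)
      (insert 1 {b | ∃ i ≤ s, ∃ j ≤ t, i + j + 2 ≤ n ∧ b = frobPairing F n i j})
    have hsmul {a b : CoordRing F n} (ha : a ∈ orbitAlgebra F n) (hb : b ∈ M) : a * b ∈ M :=
      M.smul_mem ⟨a, ha⟩ hb
    obtain ⟨c, d, hcA, hdA, hcs, hdt, hexpand⟩ :=
      exists_sum_mul_frobPairing_eq F n (orbitAlgebra F n) s t
        (fun i _ => orbitX_mem_orbitAlgebra F n i) (fun i _ => orbitY_mem_orbitAlgebra F n i)
    rw [sum_subspacePoly_mul_subspacePoly F n s t (by omega)] at hexpand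
    have hright : (if s + t + 1 = n then orbitX F n s * orbitY F n t else 0) ∈ M := by
      split_ifs
      · simpa using hsmul (mul_mem (orbitX_mem_orbitAlgebra F n s) (orbitY_mem_orbitAlgebra F n t))
          (Submodule.subset_span (Set.mem_insert 1 _))
      · exact M.zero_mem
    rw [← Finset.add_sum_erase _ _ (a := (s, t)) (by simp), hcs, hdt, one_mul, one_mul] at hexpand
    rw [eq_sub_of_add_eq hexpand]
    refine sub_mem hright (Submodule.sum_mem _ fun p hp => hsmul (mul_mem (hcA _) (hdA _)) ?_)
    simp only [Finset.mem_erase, Finset.mem_product, Finset.mem_range, ne_eq, Prod.ext_iff] at hp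
    refine Submodule.span_mono ?_ (ih _ (by omega) p.1 p.2 rfl)
    refine Set.insert_subset_insert ?_
    rintro _ ⟨i, hi, j, hj, hij, rfl⟩
    exact ⟨i, by omega, j, by omega, hij, rfl⟩

theorem orbitAlgebra_le_generatedAlgebra : orbitAlgebra F n ≤ generatedAlgebra F n := by
  refine Algebra.adjoin_le ?_
  rintro _ ⟨i | i, rfl⟩ <;> refine Algebra.subset_adjoin (Or.inl ?_)
  · exact Or.inl ⟨i, fX_succ F n i.2⟩
  · exact Or.inr ⟨i, fY_succ F n i.2⟩

theorem uInv_mem_generatedAlgebra_of_mem {j : ℤ} (hj : j ∈ uIndex n) :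
    uInv F n j ∈ generatedAlgebra F n :=
  Algebra.subset_adjoin (Or.inr ⟨j, hj, rfl⟩)

theorem frobPairing_mem_generatedAlgebra (i j : ℕ) :
    frobPairing F n i j ∈ generatedAlgebra F n := by
  refine Submodule.span_induction ?_ (zero_mem _) (fun _ _ _ _ => add_mem)
    (fun a _ _ => mul_mem (orbitAlgebra_le_generatedAlgebra F n a.2)) (frobPairing_mem_span F n i j)
  rintro _ (rfl | ⟨k, -, l, -, hkl, rfl⟩)
  · exact one_mem _
  · rw [frobPairing_eq_uInv_pow]
    exact pow_mem (uInv_mem_generatedAlgebra_of_mem F n ⟨by omega, by omega⟩) _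

theorem uInv_pow_uBound (j : uIndex n) :
    ∃ s t : ℕ, n ≤ s + t + 1 ∧ uInv F n j ^ uBound F n j = frobPairing F n s t ∧
      uBound F n j * (q ^ j.val.natAbs + 1) = q ^ s + q ^ t := by
  rcases Int.natAbs_eq j.val with hj | hj
  · refine ⟨(n - j.val.natAbs) / 2 + j.val.natAbs, (n - j.val.natAbs) / 2, by omega, ?_,
      by rw [uBound, mul_add_one, ← pow_add]⟩
    rw [frobPairing_eq_uInv_pow, min_eq_right le_self_add, Nat.cast_add, add_sub_cancel_left, ← hj,
      uBound]
  · refine ⟨(n - j.val.natAbs) / 2, (n - j.val.natAbs) / 2 + j.val.natAbs, by omega, ?_,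
      by rw [uBound, mul_add_one, ← pow_add, add_comm]⟩
    rw [frobPairing_eq_uInv_pow, min_eq_left le_self_add, Nat.cast_add, sub_add_cancel_left, ← hj,
      uBound]

omit [Field F] in
theorem frobPairing_weight (i j : ℕ) :
    q ^ min i j * (q ^ ((i : ℤ) - j).natAbs + 1) = q ^ i + q ^ j := by
  rw [mul_add_one, ← pow_add]
  rcases le_total i j with h | h
  · rw [min_eq_left h, show i + ((i : ℤ) - j).natAbs = j by omega, add_comm]
  · rw [min_eq_right h, show j + ((i : ℤ) - j).natAbs = i by omega]

theorem uInv_pow_uBound_mem_span (j : uIndex n) :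
    uInv F n j ^ uBound F n j ∈ Submodule.span (orbitAlgebra F n)
      {y | ∃ (l : uIndex n) (r : ℕ), r * (q ^ l.val.natAbs + 1) <
        uBound F n j * (q ^ j.val.natAbs + 1) ∧ y = uInv F n l ^ r} := by
  obtain ⟨s, t, hst, hpow, hweight⟩ := uInv_pow_uBound F n j
  rw [hpow, hweight]
  refine Submodule.span_mono ?_ (frobPairing_mem_span F n s t)
  rintro _ (rfl | ⟨k, hk, l, hl, hkl, rfl⟩)
  · exact ⟨j, 0, by simp [Fintype.card_pos], (pow_zero _).symm⟩
  · refine ⟨⟨k - l, by omega, by omega⟩, q ^ min k l, ?_, frobPairing_eq_uInv_pow F n k l⟩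
    rw [frobPairing_weight]
    have hq : 1 < q := Fintype.one_lt_card
    rcases hk.lt_or_eq with hk | rfl
    · exact add_lt_add_of_lt_of_le (Nat.pow_lt_pow_right hq hk) (Nat.pow_le_pow_right hq.le hl)
    · exact Nat.add_lt_add_left (Nat.pow_lt_pow_right hq (by omega)) _

theorem generatedAlgebra_le_span {a : CoordRing F n} (ha : a ∈ generatedAlgebra F n) :
    a ∈ Submodule.span (orbitAlgebra F n)
      (Set.range (boxMonomial (uBound F n) fun j => uInv F n j)) := by
  refine adjoin_range_le_span_boxMonomial _ _ _ (uInv_pow_uBound_mem_span F n) ?_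
  set A := Algebra.adjoin (orbitAlgebra F n) (Set.range fun j : uIndex n => uInv F n j)
  have horbit {b : CoordRing F n} (hb : b ∈ orbitAlgebra F n) : b ∈ A :=
    A.algebraMap_mem ⟨b, hb⟩
  have hu (j : uIndex n) : uInv F n j ∈ A := Algebra.subset_adjoin ⟨j, rfl⟩
  have hle : generatedAlgebra F n ≤ A.restrictScalars F := by
    refine Algebra.adjoin_le ?_
    rintro _ ((⟨i, rfl⟩ | ⟨i, rfl⟩) | ⟨j, hj, rfl⟩)
    · exact horbit (by simpa only [fX_succ F n i.2] using orbitX_mem_orbitAlgebra F n i)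
    · exact horbit (by simpa only [fY_succ F n i.2] using orbitY_mem_orbitAlgebra F n i)
    · exact hu ⟨j, hj⟩
  exact hle ha

end GeneratedAlgebra

/-! ### Leading monomials -/

section LeadingMonomial

open scoped MonomialOrder

variable {K σ τ ι : Type*} [Field K] (m : MonomialOrder σ)

theorem linearIndependent_of_injective_degree {v : ι → MvPolynomial σ K} (hv : ∀ i, v i ≠ 0)
    (hinj : Function.Injective fun i => m.degree (v i)) : LinearIndependent K v := by
  classical
  rw [linearIndependent_iff']
  intro s c hc i hi
  by_contra hci
  obtain ⟨j, hj, hmax⟩ := (s.filter fun i => c i ≠ 0).exists_max_image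
    (fun i => m.toSyn (m.degree (v i))) ⟨i, by simp [hi, hci]⟩
  rw [Finset.mem_filter] at hj
  have hcoeff : coeff (m.degree (v j)) (∑ i ∈ s, c i • v i) = c j * m.leadingCoeff (v j) := by
    rw [coeff_sum, Finset.sum_eq_single_of_mem j hj.1, coeff_smul, smul_eq_mul,
      MonomialOrder.leadingCoeff]
    intro k hk hkj
    rw [coeff_smul]
    by_cases hck : c k = 0
    · rw [hck, zero_smul]
    · rw [m.coeff_eq_zero_of_lt, smul_zero]
      refine (hmax k (by simp [hk, hck])).lt_of_ne fun h => hkj ?_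
      exact hinj (m.toSyn.injective h)
  rw [hc, coeff_zero, eq_comm, mul_eq_zero, m.leadingCoeff_eq_zero_iff] at hcoeff
  exact hcoeff.elim hj.2 (hv j)

theorem aeval_monomial_one_ne_zero {g : τ → MvPolynomial σ K} (hg : ∀ i, g i ≠ 0) (s : τ →₀ ℕ) :
    aeval g (monomial s (1 : K)) ≠ 0 := by
  rw [aeval_monomial, map_one, one_mul]
  exact Finset.prod_ne_zero_iff.mpr fun i _ => pow_ne_zero _ (hg i)

theorem degree_aeval_monomial_one {g : τ → MvPolynomial σ K} (hg : ∀ i, g i ≠ 0) (s : τ →₀ ℕ) :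
    m.degree (aeval g (monomial s (1 : K))) =
      Finsupp.linearCombination ℕ (fun i => m.degree (g i)) s := by
  rw [aeval_monomial, map_one, one_mul, Finsupp.prod, m.degree_prod fun i _ => pow_ne_zero _ (hg i),
    Finsupp.linearCombination_apply]
  exact Finset.sum_congr rfl fun i _ => m.degree_pow _ _

theorem linearIndependent_adjoin_range_of_injective2_degree {g : τ → MvPolynomial σ K}
    (hg : ∀ i, g i ≠ 0) {v : ι → MvPolynomial σ K} (hv : ∀ i, v i ≠ 0)
    (hinj : Function.Injective2 fun (i : ι) (s : τ →₀ ℕ) =>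
      Finsupp.linearCombination ℕ (fun i => m.degree (g i)) s + m.degree (v i)) :
    LinearIndependent (Algebra.adjoin K (Set.range g)) v := by
  have hli : LinearIndependent K fun p : Σ _ : ι, τ →₀ ℕ =>
      aeval g (monomial p.2 (1 : K)) * v p.1 := by
    refine linearIndependent_of_injective_degree m
      (fun p => mul_ne_zero (aeval_monomial_one_ne_zero hg _) (hv _)) ?_
    rintro ⟨i, s⟩ ⟨j, t⟩ hst
    dsimp only at hst
    rw [m.degree_mul (aeval_monomial_one_ne_zero hg _) (hv _),
      m.degree_mul (aeval_monomial_one_ne_zero hg _) (hv _), degree_aeval_monomial_one m hg,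
      degree_aeval_monomial_one m hg] at hst
    obtain ⟨rfl, rfl⟩ := hinj hst
    rfl
  rw [linearIndependent_iff'] at hli ⊢
  intro I c hc i hi
  have hrange (a : Algebra.adjoin K (Set.range g)) : ∃ p : MvPolynomial τ K, aeval g p = a := by
    rw [← AlgHom.mem_range, ← Algebra.adjoin_range_eq_range_aeval]
    exact a.2
  choose p hp using fun i => hrange (c i)
  have hzero : p i = 0 := by
    ext s
    by_cases hs : s ∈ (p i).support
    · refine hli (I.sigma fun i => (p i).support) (fun a => coeff a.2 (p a.1)) ?_ ⟨i, s⟩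
        (Finset.mem_sigma.mpr ⟨hi, hs⟩)
      rw [Finset.sum_sigma, ← hc]
      refine Finset.sum_congr rfl fun j _ => ?_
      rw [Subalgebra.smul_def, ← hp, smul_eq_mul]
      conv_rhs => rw [(p j).as_sum, map_sum, Finset.sum_mul]
      refine Finset.sum_congr rfl fun t _ => ?_
      rw [← mul_one (coeff t (p j)), ← smul_eq_mul, ← smul_monomial, map_smul, smul_mul_assoc,
        smul_eq_mul, mul_one]
    · rwa [notMem_support_iff] at hs
  rw [← Subtype.val_inj, ← hp, hzero, map_zero, ZeroMemClass.coe_zero]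

theorem algebraicIndependent_of_linearIndependent_degree {g : τ → MvPolynomial σ K}
    (hg : ∀ i, g i ≠ 0) (hli : LinearIndependent ℕ fun i => m.degree (g i)) :
    AlgebraicIndependent K g := by
  have hmon : LinearIndependent K (aeval g ∘ basisMonomials τ K) :=
    linearIndependent_of_injective_degree m (aeval_monomial_one_ne_zero hg) fun s t hst =>
      hli (by simpa only [Function.comp_apply, coe_basisMonomials, degree_aeval_monomial_one m hg]
        using hst)
  rw [algebraicIndependent_iff_injective_aeval]
  have hinj := (basisMonomials τ K).injective_constr_of_linearIndependent (R₂ := ℕ) hmon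
  rwa [show aeval g ∘ basisMonomials τ K = fun s => (aeval g).toLinearMap (basisMonomials τ K s)
    from rfl, Module.Basis.constr_self] at hinj

/-- The lexicographic monomial order in which variables of smaller rank are larger. -/
noncomputable def rankLex [Finite σ] (rank : σ → ℕ) (hrank : Function.Injective rank) :
    MonomialOrder σ :=
  letI := LinearOrder.lift' rank hrank
  MonomialOrder.lex

theorem rankLex_lt [Finite σ] {rank : σ → ℕ} (hrank : Function.Injective rank) {d e : σ →₀ ℕ}
    (a : σ) (heq : ∀ c, rank c < rank a → d c = e c) (hlt : d a < e a) :
    d ≺[rankLex rank hrank] e := by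
  let _ := LinearOrder.lift' rank hrank
  change toLex d < toLex e
  exact ⟨a, heq, hlt⟩

theorem linearCombination_single_apply {w : τ → σ} (hw : Function.Injective w) (N : τ → ℕ)
    (s : τ →₀ ℕ) (c : τ) :
    Finsupp.linearCombination ℕ (fun c => Finsupp.single (w c) (N c)) s (w c) = s c * N c := by
  classical
  rw [Finsupp.linearCombination_apply, Finsupp.sum_apply, Finsupp.sum, Finset.sum_eq_single c]
  · simp
  · intro b _ hb
    simp [hw.ne hb]
  · simp +contextual

end LeadingMonomial

section CoordOrder

open scoped MonomialOrder

local notation "q" => Fintype.card F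

variable {n} in
/-- The position of a variable in the list `y_1, …, y_n, x_n, …, x_1`. -/
def varRank : Fin n ⊕ Fin n → ℕ := Sum.elim (fun i => 2 * n - i) (fun i => i)

variable {n} in
theorem varRank_injective : Function.Injective (varRank (n := n)) := by
  rintro (i | i) (j | j) h <;> simp only [varRank, Sum.elim_inl, Sum.elim_inr] at h
  · exact congrArg Sum.inl (Fin.ext (by omega))
  · omega
  · omega
  · exact congrArg Sum.inr (Fin.ext h)

/-- The lexicographic monomial order with `y_1 > ⋯ > y_n > x_n > ⋯ > x_1`. -/
noncomputable def coordOrder : MonomialOrder (Fin n ⊕ Fin n) := rankLex varRank varRank_injective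

variable {n}

theorem strictAnti_varRank_inl : StrictAnti (varRank ∘ Sum.inl (α := Fin n) (β := Fin n)) :=
  fun i j hij => by simp only [Function.comp_apply, varRank, Sum.elim_inl]; omega

theorem degree_subspacePoly {z : ℕ → CoordRing F n} {w : Fin n → Fin n ⊕ Fin n}
    (hz : ∀ k : Fin n, z k = X (w k)) (hw : StrictAnti (varRank ∘ w)) (s : ℕ) {k : Fin n}
    (hk : s ≤ k) :
    (coordOrder n).degree (subspacePoly F z s (z k)) = Finsupp.single (w k) (q ^ s) := by
  induction s generalizing k with
  | zero => rw [subspacePoly_zero, hz, MonomialOrder.degree_X, pow_zero]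
  | succ s ih =>
    have hne {k : Fin n} (hk : s ≤ k) : subspacePoly F z s (z k) ≠ 0 := by
      refine (coordOrder n).ne_zero_of_degree_ne_zero ?_
      rw [ih hk]
      exact Finsupp.single_ne_zero.mpr (pow_ne_zero _ Fintype.card_ne_zero)
    obtain ⟨l, rfl⟩ : ∃ l : Fin n, s = l := ⟨⟨s, by omega⟩, rfl⟩
    have hrank : varRank (w k) < varRank (w l) := hw (Fin.lt_def.mpr hk)
    have hlk : w l ≠ w k := fun h => hrank.ne' (congrArg varRank h)
    have hpow : (coordOrder n).degree (subspacePoly F z l (z k) ^ q) =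
        Finsupp.single (w k) (q ^ (l + 1 : ℕ)) := by
      rw [MonomialOrder.degree_pow, ih (by omega), Finsupp.smul_single, smul_eq_mul, pow_succ']
    rw [subspacePoly_succ, MonomialOrder.degree_sub_of_lt, hpow]
    rw [hpow, MonomialOrder.degree_mul (pow_ne_zero _ (hne le_rfl)) (hne (by omega)),
      MonomialOrder.degree_pow, ih le_rfl, ih (by omega)]
    refine rankLex_lt varRank_injective (w k) (fun c hc => ?_) ?_
    · have hkc : w k ≠ c := fun h => hc.ne' (congrArg varRank h)
      have hlc : w l ≠ c := fun h => (hc.trans hrank).ne' (congrArg varRank h)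
      simp [hkc, hlc]
    · simpa [hlk] using Nat.pow_lt_pow_right (Fintype.one_lt_card (α := F)) (Nat.lt_succ_self l)

theorem degree_orbitX (k : Fin n) :
    (coordOrder n).degree (orbitX F n k) = Finsupp.single (Sum.inl k) (q ^ (k : ℕ)) :=
  degree_subspacePoly F (xVar_val F n) strictAnti_varRank_inl _ le_rfl

theorem degree_orbitY (k : Fin n) :
    (coordOrder n).degree (orbitY F n k) = Finsupp.single (Sum.inr k.rev) (q ^ (k : ℕ)) :=
  degree_subspacePoly F (w := Sum.inr ∘ Fin.rev) (yVar_val F n)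
    (fun i j hij => by
      simp only [Function.comp_apply, varRank, Sum.elim_inr, Fin.val_rev]; omega) _ le_rfl

theorem orbitX_ne_zero {i : ℕ} (hi : i < n) : orbitX F n i ≠ 0 := by
  refine (coordOrder n).ne_zero_of_degree_ne_zero ?_
  rw [degree_orbitX F ⟨i, hi⟩]
  exact Finsupp.single_ne_zero.mpr (pow_ne_zero _ Fintype.card_ne_zero)

theorem orbitY_ne_zero {i : ℕ} (hi : i < n) : orbitY F n i ≠ 0 := by
  refine (coordOrder n).ne_zero_of_degree_ne_zero ?_
  rw [degree_orbitY F ⟨i, hi⟩]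
  exact Finsupp.single_ne_zero.mpr (pow_ne_zero _ Fintype.card_ne_zero)

variable (n)

/-- The images `f_1^q, …, f_n^q, f_1^*, …, f_n^*` of the orbit products of level `n + 1` under
`x_1, y_1 ↦ 0`. -/
noncomputable def frobOrbitPoly : Fin n ⊕ Fin n → CoordRing F n :=
  Sum.elim (fun i => orbitX F n i ^ q) (fun i => orbitY F n i)

/-- The algebra `F[f_1^q, …, f_n^q, f_1^*, …, f_n^*]`. -/
noncomputable def frobOrbitAlgebra : Subalgebra F (CoordRing F n) :=
  Algebra.adjoin F (Set.range (frobOrbitPoly F n))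

/-- The exponents of `frobOrbitPoly`: its leading monomials are `flagVar c ^ q ^ frobExp c`. -/
def frobExp : Fin n ⊕ Fin n → ℕ := Sum.elim (fun i => i + 1) (fun i => i)

/-- The variables in the order in which the orbit products run through them. -/
def flagVar : Fin n ⊕ Fin n → Fin n ⊕ Fin n := Sum.map id Fin.rev

variable {n}

theorem flagVar_injective : Function.Injective (flagVar n) :=
  Function.injective_id.sumMap Fin.rev_injective

theorem degree_frobOrbitPoly (c : Fin n ⊕ Fin n) :
    (coordOrder n).degree (frobOrbitPoly F n c) =
      Finsupp.single (flagVar n c) (q ^ frobExp n c) := by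
  rcases c with i | i
  · change (coordOrder n).degree (orbitX F n i ^ q) = Finsupp.single (Sum.inl i) (q ^ (i + 1 : ℕ))
    rw [MonomialOrder.degree_pow, degree_orbitX, Finsupp.smul_single, smul_eq_mul, pow_succ']
  · exact degree_orbitY F i

theorem frobOrbitPoly_ne_zero (c : Fin n ⊕ Fin n) : frobOrbitPoly F n c ≠ 0 := by
  rcases c with i | i
  · exact pow_ne_zero _ (orbitX_ne_zero F i.2)
  · exact orbitY_ne_zero F i.2

variable (n)

theorem algebraicIndependent_frobOrbitPoly : AlgebraicIndependent F (frobOrbitPoly F n) := by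
  refine algebraicIndependent_of_linearIndependent_degree (coordOrder n)
    (frobOrbitPoly_ne_zero F) ?_
  simp only [degree_frobOrbitPoly]
  intro s t hst
  ext c
  have hc := DFunLike.congr_fun hst (flagVar n c)
  rw [linearCombination_single_apply (flagVar_injective (n := n)),
    linearCombination_single_apply (flagVar_injective (n := n))] at hc
  exact Nat.eq_of_mul_eq_mul_right (pow_pos Fintype.card_pos _) hc

/-- The monomials in which the exponent of `flagVar n c` is less than `q ^ frobExp n c`. -/
noncomputable def frobBox : (∀ c, Fin (q ^ frobExp n c)) → CoordRing F n :=
  boxMonomial (fun c => q ^ frobExp n c) fun c => X (flagVar n c)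

theorem degree_frobBox_apply (d : ∀ c, Fin (q ^ frobExp n c)) (c : Fin n ⊕ Fin n) :
    (coordOrder n).degree (frobBox F n d) (flagVar n c) = d c := by
  have hdegree : (coordOrder n).degree (frobBox F n d) =
      ∑ c, Finsupp.single (flagVar n c) (d c : ℕ) := by
    rw [frobBox, boxMonomial,
      MonomialOrder.degree_prod fun c _ => pow_ne_zero _ (X_ne_zero (flagVar n c))]
    simp only [MonomialOrder.degree_pow, MonomialOrder.degree_X, Finsupp.smul_single, smul_eq_mul,
      mul_one]
  rw [hdegree, Finsupp.finsetSum_apply, Finset.sum_eq_single_of_mem c (Finset.mem_univ c),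
    Finsupp.single_eq_same]
  exact fun b _ hb => Finsupp.single_eq_of_ne ((flagVar_injective (n := n)).ne hb.symm)

theorem linearIndependent_frobBox :
    LinearIndependent (frobOrbitAlgebra F n) (frobBox F n) := by
  refine linearIndependent_adjoin_range_of_injective2_degree (coordOrder n)
    (frobOrbitPoly_ne_zero F) (fun d => ?_) ?_
  · rw [frobBox, boxMonomial, Finset.prod_ne_zero_iff]
    exact fun c _ => pow_ne_zero _ (X_ne_zero (flagVar n c))
  intro d d' s s' h
  have hc (c : Fin n ⊕ Fin n) : (d c : ℕ) = d' c ∧ s c = s' c := by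
    have hdigits := DFunLike.congr_fun h (flagVar n c)
    simp only [degree_frobOrbitPoly, Finsupp.add_apply, degree_frobBox_apply,
      linearCombination_single_apply (flagVar_injective (n := n))] at hdigits
    have hmod := congrArg (· % q ^ frobExp n c) hdigits
    simp only [Nat.mul_add_mod', Nat.mod_eq_of_lt (Fin.is_lt _)] at hmod
    rw [hmod, add_left_inj] at hdigits
    exact ⟨hmod, Nat.eq_of_mul_eq_mul_right (pow_pos Fintype.card_pos _) hdigits⟩
  exact ⟨funext fun c => Fin.ext (hc c).1, Finsupp.ext fun c => (hc c).2⟩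

end CoordOrder
/-! ### Reduction modulo `x_1` -/

section Reduction

local notation "q" => Fintype.card F

variable (m : ℕ)

/-- Reduction modulo `x_1`: the map `x_1 ↦ 0`, `y_1 ↦ T`, `x_{i+1} ↦ x_i`, `y_{i+1} ↦ y_i`. -/
noncomputable def modX0 : CoordRing F (m + 1) →ₐ[F] Polynomial (CoordRing F m) :=
  aeval (Sum.elim (Fin.cons 0 fun i => Polynomial.C (X (Sum.inl i)))
    (Fin.cons Polynomial.X fun i => Polynomial.C (X (Sum.inr i))))

/-- The reduction modulo `x_1` of the orbit product of `y_1`. -/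
noncomputable def lastOrbit : Polynomial (CoordRing F m) :=
  subspacePoly F (fun i => Polynomial.C (yVar F m i)) m Polynomial.X

omit [Fintype F] in
theorem modX0_xVar_zero : modX0 F m (xVar F (m + 1) 0) = 0 := by
  simp [modX0, xVar]

omit [Fintype F] in
theorem modX0_xVar_succ (i : ℕ) :
    modX0 F m (xVar F (m + 1) (i + 1)) = Polynomial.C (xVar F m i) := by
  by_cases hi : i < m
  · rw [xVar, xVar, dif_pos hi, dif_pos (by omega), modX0, aeval_X, Sum.elim_inl]
    exact Fin.cons_succ (α := fun _ => Polynomial (CoordRing F m)) _ _ (⟨i, hi⟩ : Fin m)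
  · rw [xVar, xVar, dif_neg hi, dif_neg (by omega), map_zero, map_zero]

omit [Fintype F] in
theorem modX0_yVar {i : ℕ} (hi : i < m) :
    modX0 F m (yVar F (m + 1) i) = Polynomial.C (yVar F m i) := by
  have hrev : Fin.rev (⟨i, by omega⟩ : Fin (m + 1)) = (Fin.rev ⟨i, hi⟩ : Fin m).succ := by
    ext; simp only [Fin.val_rev, Fin.val_succ]; omega
  rw [yVar, yVar, dif_pos hi, dif_pos (by omega), hrev, modX0, aeval_X, Sum.elim_inr,
    Fin.cons_succ]

omit [Fintype F] in
theorem modX0_yVar_last : modX0 F m (yVar F (m + 1) m) = Polynomial.X := by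
  rw [show (m : ℕ) = Fin.last m from rfl, yVar_val, Fin.rev_last, modX0, aeval_X, Sum.elim_inr,
    Fin.cons_zero]

theorem C_subspacePoly (z : ℕ → CoordRing F m) (s : ℕ) (T : CoordRing F m) :
    Polynomial.C (subspacePoly F z s T) =
      subspacePoly F (fun i => Polynomial.C (z i)) s (Polynomial.C T) :=
  map_subspacePoly (Polynomial.CAlgHom (R := F)) z s T

theorem modX0_orbitX_zero : modX0 F m (orbitX F (m + 1) 0) = 0 := modX0_xVar_zero F m

theorem modX0_orbitX_succ (i : ℕ) :
    modX0 F m (orbitX F (m + 1) (i + 1)) = Polynomial.C (orbitX F m i ^ q) := by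
  rw [orbitX, map_subspacePoly, subspacePoly_succ_of_zero _ (modX0_xVar_zero F m), map_pow,
    orbitX, C_subspacePoly]
  simp only [modX0_xVar_succ]

theorem modX0_orbitY {i : ℕ} (hi : i < m) :
    modX0 F m (orbitY F (m + 1) i) = Polynomial.C (orbitY F m i) := by
  rw [orbitY, orbitY, C_subspacePoly, map_subspacePoly, modX0_yVar F m hi,
    subspacePoly_congr fun j hj => modX0_yVar F m (hj.trans hi)]

theorem modX0_orbitY_last : modX0 F m (orbitY F (m + 1) m) = lastOrbit F m := by
  rw [orbitY, map_subspacePoly, modX0_yVar_last, lastOrbit,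
    subspacePoly_congr fun j hj => modX0_yVar F m hj]

theorem modX0_frobPairing (i j : ℕ) :
    modX0 F m (frobPairing F (m + 1) i j) = Polynomial.C (frobPairing F m i j) := by
  have hq (k : ℕ) : q ^ k ≠ 0 := pow_ne_zero _ Fintype.card_ne_zero
  simp only [frobPairing, modX0, map_sum, map_mul, map_pow, aeval_X, Fin.sum_univ_succ, map_add,
    Sum.elim_inl, Sum.elim_inr, Fin.cons_zero, Fin.cons_succ, zero_pow (hq _), zero_mul, zero_add]

theorem modX0_uInv (j : ℤ) :
    modX0 F m (uInv F (m + 1) j) = Polynomial.C (uInv F m j) := by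
  obtain ⟨k, rfl | rfl⟩ := j.eq_nat_or_neg
  · simp only [uInv_natCast, modX0_frobPairing]
  · simp only [uInv_neg_natCast, modX0_frobPairing]

theorem eval_zero_lastOrbit : (lastOrbit F m).eval 0 = 0 := by
  have h := map_subspacePoly (Polynomial.aeval (0 : CoordRing F m) |>.restrictScalars F)
    (fun i => Polynomial.C (yVar F m i)) m Polynomial.X
  simpa [lastOrbit, Polynomial.coe_aeval_eq_eval] using h

theorem lastOrbit_ne_zero : lastOrbit F m ≠ 0 := by
  rw [lastOrbit, subspacePoly_eq_prod, Finset.prod_ne_zero_iff]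
  intro α _
  have hC : ∑ j : Fin m, algebraMap F (Polynomial (CoordRing F m)) (α j) *
      Polynomial.C (yVar F m j) = Polynomial.C (∑ j : Fin m, C (α j) * yVar F m j) := by
    rw [map_sum]
    exact Finset.sum_congr rfl fun j _ => (map_mul Polynomial.C (C (α j)) _).symm
  rw [hC]
  exact Polynomial.X_add_C_ne_zero _

theorem eq_zero_of_comp_lastOrbit_eq_zero {p : Polynomial (CoordRing F m)}
    (hp : p.comp (lastOrbit F m) = 0) : p = 0 := by
  refine (Polynomial.comp_eq_zero_iff.mp hp).resolve_right fun h => lastOrbit_ne_zero F m ?_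
  rw [h.2, Polynomial.coeff_zero_eq_eval_zero, eval_zero_lastOrbit, map_zero]

end Reduction
/-! ### Independence of the reduced monomials modulo `x_1` -/

section FieldDegree

variable {k L : Type*} [Field k] [Field L] [Algebra k L]

theorem inv_mem_of_le_span {E : Type*} [Finite E] (u : E → L) (A : Subalgebra k L)
    (hA : Subalgebra.toSubmodule A ≤ Submodule.span k (Set.range u)) {x : L} (hx : x ∈ A) :
    x⁻¹ ∈ A := by
  have := FiniteDimensional.span_of_finite k (Set.finite_range u)
  have : FiniteDimensional k A := Submodule.finiteDimensional_of_le hA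
  exact A.inv_mem_of_algebraic (x := ⟨x, hx⟩)
    ((Algebra.IsAlgebraic.isAlgebraic (R := k) (⟨x, hx⟩ : A)).algebraMap)

-- If `u` spans `K` over `k` and `w` spans `L` over `K`, then `[L : k] ≤ |E| |W|`; a linearly
-- independent family of `|E| |W|` elements of `L` therefore forces `u` to be a basis of `K`.
theorem linearIndependent_of_card_mul_card_le {D E W : Type*} [Fintype D] [Fintype E] [Fintype W]
    [Nonempty W] {u : E → L} {v : D → L} {w : W → L} (K : IntermediateField k L)
    (hu : Subalgebra.toSubmodule K.toSubalgebra ≤ Submodule.span k (Set.range u))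
    (hw : Submodule.span K (Set.range w) = ⊤) (hv : LinearIndependent k v)
    (hcard : Fintype.card E * Fintype.card W ≤ Fintype.card D) : LinearIndependent k u := by
  have hspan := FiniteDimensional.span_of_finite k (Set.finite_range u)
  have : FiniteDimensional k K := Submodule.finiteDimensional_of_le hu
  have : FiniteDimensional K L := ⟨hw ▸ Submodule.fg_span (Set.finite_range w)⟩
  have : FiniteDimensional k L := Module.Finite.trans K L
  have hL : Module.finrank K L ≤ Fintype.card W := by
    rw [← finrank_top, ← hw]
    exact finrank_range_le_card w
  have hK : Module.finrank k K ≤ (Set.range u).finrank k := Submodule.finrank_mono hu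
  refine linearIndependent_iff_card_le_finrank_span.mpr
    (Nat.le_of_mul_le_mul_right ?_ (Fintype.card_pos (α := W)))
  calc Fintype.card E * Fintype.card W ≤ Fintype.card D := hcard
    _ ≤ Module.finrank k L := hv.fintype_card_le_finrank
    _ = Module.finrank k K * Module.finrank K L := (Module.finrank_mul_finrank k K L).symm
    _ ≤ (Set.range u).finrank k * Fintype.card W := Nat.mul_le_mul hK hL

theorem map_mem_span_image {S S' R R' : Type*} [CommSemiring S] [CommSemiring S'] [Semiring R]
    [Semiring R'] [Algebra S R] [Algebra S' R'] (φ : R →+* R')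
    (hφ : ∀ s : S, ∃ s' : S', φ (algebraMap S R s) = algebraMap S' R' s') {X : Set R} {x : R}
    (hx : x ∈ Submodule.span S X) : φ x ∈ Submodule.span S' (φ '' X) := by
  induction hx using Submodule.span_induction with
  | mem x hx => exact Submodule.subset_span ⟨x, hx, rfl⟩
  | zero => rw [map_zero]; exact zero_mem _
  | add x y _ _ hx hy => rw [map_add]; exact add_mem hx hy
  | smul s x _ hx =>
    obtain ⟨s', hs'⟩ := hφ s
    rw [Algebra.smul_def, map_mul, hs', ← Algebra.smul_def]
    exact Submodule.smul_mem _ s' hx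

theorem linearIndependent_of_forall_fractionField.{u, v, w} {S : Type u} {R : Type v} {ι : Type w}
    [CommRing S] [CommRing R] [IsDomain R] [Algebra S R] (A : Subalgebra S R) {v : ι → R}
    (hv : ∀ (k L : Type v) [Field k] [Field L] [Algebra k L] [Algebra A k] [Algebra R L]
      [IsScalarTower A k L] [IsFractionRing A k] [IsFractionRing R L],
      LinearIndependent k (algebraMap R L ∘ v)) : LinearIndependent A v := by
  let L := FractionRing R
  let _ : Algebra (FractionRing A) L := FractionRing.liftAlgebra A L
  have h := hv (FractionRing A) L
  rw [← LinearIndependent.iff_fractionRing A (FractionRing A)] at h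
  exact LinearIndependent.of_comp (IsScalarTower.toAlgHom A R L).toLinearMap h

end FieldDegree

section DivisionClosed

local notation "q" => Fintype.card F

variable (T : Subalgebra F (CoordRing F n))

-- By induction on `s`, using the relation with right-hand side `f_{s+1} f_{n-s}^*`.
theorem orbitX_mem_of_div (hdiv : ∀ a b, a * b ∈ T → b ∈ T → b ≠ 0 → a ∈ T)
    (hpair : ∀ i j, i + j < n → frobPairing F n i j ∈ T) (hY : ∀ i, orbitY F n i ∈ T) (s : ℕ) :
    orbitX F n s ∈ T := by
  induction s using Nat.strong_induction_on with
  | _ s ih =>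
    by_cases hs : s < n
    · obtain ⟨c, d, hc, hd, -, -, hexpand⟩ :=
        exists_sum_mul_frobPairing_eq F n T s (n - 1 - s) ih fun i _ => hY i
      rw [sum_subspacePoly_mul_subspacePoly F n _ _ (by omega), if_pos (by omega)] at hexpand
      refine hdiv _ _ (hexpand ▸ sum_mem fun p hp => ?_) (hY (n - 1 - s))
        (orbitY_ne_zero F (by omega))
      simp only [Finset.mem_product, Finset.mem_range] at hp
      exact mul_mem (mul_mem (hc _) (hd _)) (hpair _ _ (by omega))
    · simp [orbitX, xVar, hs]

-- By descending induction on `s`: `∑_k L_s(x_k) y_k = f_{s+1} y_{s+1} + ∑_{k > s+1} L_s(x_k) y_k`.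
theorem eq_top_of_div (hdiv : ∀ a b, a * b ∈ T → b ∈ T → b ≠ 0 → a ∈ T)
    (hpair : ∀ i < n, frobPairing F n i 0 ∈ T) (hx : ∀ k, X (Sum.inl k) ∈ T) : T = ⊤ := by
  have hL (s : ℕ) (k : Fin n) : subspacePoly F (xVar F n) s (X (Sum.inl k)) ∈ T := by
    refine subspacePoly_mem T (fun i => ?_) s (hx k)
    by_cases hi : i < n
    · simpa only [xVar, dif_pos hi] using hx _
    · simp [xVar, hi]
  have horbit (i : ℕ) : orbitX F n i ∈ T := by
    by_cases hi : i < n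
    · rw [orbitX, xVar, dif_pos hi]
      exact hL _ _
    · simp [orbitX, xVar, hi]
  have hy (s : Fin n) : X (Sum.inr s) ∈ T := by
    induction hr : n - s using Nat.strong_induction_on generalizing s with
    | _ r ih =>
      obtain ⟨c, d, hc, hd, -, -, hexpand⟩ :=
        exists_sum_mul_frobPairing_eq F n T s 0 (fun i _ => horbit i) (by simp)
      simp only [subspacePoly_zero] at hexpand
      rw [← Finset.add_sum_erase _ _ (Finset.mem_univ s)] at hexpand
      refine hdiv _ _ ?_ (horbit s) (orbitX_ne_zero F s.2)
      rw [orbitX, xVar_val, mul_comm, eq_sub_of_add_eq hexpand.symm]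
      refine sub_mem (sum_mem fun p hp => ?_) (sum_mem fun k hk => ?_)
      · simp only [Finset.mem_product, Finset.mem_range] at hp
        rw [show p.2 = 0 by omega]
        exact mul_mem (mul_mem (hc _) (hd _)) (hpair _ (by omega))
      · rcases lt_or_gt_of_ne (Finset.ne_of_mem_erase hk) with hks | hks
        · rw [← xVar_val, subspacePoly_eq_zero_of_lt _ hks, zero_mul]
          exact zero_mem _
        · exact mul_mem (hL _ _) (ih _ (by omega) k rfl)
  rw [eq_top_iff, ← MvPolynomial.adjoin_range_X]
  refine Algebra.adjoin_le ?_
  rintro _ ⟨k | k, rfl⟩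
  exacts [hx k, hy k]

end DivisionClosed

section Independence

local notation "q" => Fintype.card F

variable (m : ℕ)

/-- The map `x_1, y_1 ↦ 0`, `x_{i+1} ↦ x_i`, `y_{i+1} ↦ y_i`. -/
noncomputable def modX0Y0 : CoordRing F (m + 1) →ₐ[F] CoordRing F m :=
  ((Polynomial.aeval (0 : CoordRing F m)).restrictScalars F).comp (modX0 F m)

omit [Fintype F] in
theorem modX0Y0_apply (a : CoordRing F (m + 1)) : modX0Y0 F m a = (modX0 F m a).eval 0 := by
  simp [modX0Y0, Polynomial.coe_aeval_eq_eval]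

theorem modX0Y0_uInv (j : ℤ) : modX0Y0 F m (uInv F (m + 1) j) = uInv F m j := by
  rw [modX0Y0_apply, modX0_uInv, Polynomial.eval_C]

theorem orbitX_pow_mem_frobOrbitAlgebra (i : ℕ) :
    orbitX F m i ^ q ∈ frobOrbitAlgebra F m := by
  by_cases hi : i < m
  · exact Algebra.subset_adjoin ⟨Sum.inl ⟨i, hi⟩, rfl⟩
  · simp [orbitX, xVar, hi]

theorem orbitY_mem_frobOrbitAlgebra (i : ℕ) : orbitY F m i ∈ frobOrbitAlgebra F m := by
  by_cases hi : i < m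
  · exact Algebra.subset_adjoin ⟨Sum.inr ⟨i, hi⟩, rfl⟩
  · simp [orbitY, yVar, hi]

theorem modX0Y0_mem_frobOrbitAlgebra {a : CoordRing F (m + 1)}
    (ha : a ∈ orbitAlgebra F (m + 1)) : modX0Y0 F m a ∈ frobOrbitAlgebra F m := by
  have hle : orbitAlgebra F (m + 1) ≤ (frobOrbitAlgebra F m).comap (modX0Y0 F m) := by
    refine Algebra.adjoin_le ?_
    rintro _ ⟨⟨i, hi⟩ | ⟨i, hi⟩, rfl⟩ <;>
      simp only [orbitPoly, Sum.elim_inl, Sum.elim_inr, Subalgebra.coe_comap, Set.mem_preimage,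
        SetLike.mem_coe, modX0Y0_apply]
    · rcases i with _ | i
      · rw [modX0_orbitX_zero, Polynomial.eval_zero]
        exact zero_mem _
      · rw [modX0_orbitX_succ, Polynomial.eval_C]
        exact orbitX_pow_mem_frobOrbitAlgebra F m i
    · rcases Nat.lt_succ_iff_lt_or_eq.mp hi with hi | rfl
      · rw [modX0_orbitY F m hi, Polynomial.eval_C]
        exact orbitY_mem_frobOrbitAlgebra F m i
      · rw [modX0_orbitY_last, eval_zero_lastOrbit]
        exact zero_mem _
  exact hle ha

theorem uInv_pow_uBound_mem_span_frobOrbitAlgebra (j : uIndex (m + 1)) :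
    uInv F m j ^ uBound F (m + 1) j ∈ Submodule.span (frobOrbitAlgebra F m)
      {y | ∃ (l : uIndex (m + 1)) (r : ℕ), r * (q ^ l.val.natAbs + 1) <
        uBound F (m + 1) j * (q ^ j.val.natAbs + 1) ∧ y = uInv F m l ^ r} := by
  have h := map_mem_span_image (S' := frobOrbitAlgebra F m) (modX0Y0 F m : _ →+* CoordRing F m)
    (fun a => ⟨⟨_, modX0Y0_mem_frobOrbitAlgebra F m a.2⟩, rfl⟩)
    (uInv_pow_uBound_mem_span F (m + 1) j)
  rw [map_pow, RingHom.coe_coe, modX0Y0_uInv] at h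
  refine Submodule.span_mono ?_ h
  rintro _ ⟨_, ⟨l, r, hlt, rfl⟩, rfl⟩
  exact ⟨l, r, hlt, by rw [map_pow, modX0Y0_uInv]⟩

theorem sum_Icc_neg_eq_sum_range (g : ℤ → ℕ) :
    ∑ j ∈ Finset.Icc (-(m : ℤ)) (m - 1), g j = ∑ i ∈ Finset.range m, (g i + g (-(i + 1))) := by
  induction m with
  | zero => simp
  | succ m ih =>
    have hIcc : Finset.Icc (-((m + 1 : ℕ) : ℤ)) ((m + 1 : ℕ) - 1) =
        insert (m : ℤ) (insert (-(m + 1 : ℤ)) (Finset.Icc (-(m : ℤ)) (m - 1))) := by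
      ext j; simp only [Finset.mem_Icc, Finset.mem_insert]; omega
    rw [Finset.sum_range_succ, ← ih, hIcc, Finset.sum_insert, Finset.sum_insert]
    · ring
    · simp
    · simp only [Finset.mem_insert, Finset.mem_Icc]; omega

-- Pair the indices `i` and `-(i + 1)`, which contribute `m - i` in total.
theorem sum_uIndex_succ :
    ∑ j : uIndex (m + 1), (m + 1 - j.val.natAbs) / 2 = ∑ i : Fin m, (i + 1 : ℕ) := by
  have hsub : Finset.Icc (2 - ((m + 1 : ℕ) : ℤ)) ((m + 1 : ℕ) - 2) ⊆
      Finset.Icc (-(m : ℤ)) (m - 1) := Finset.Icc_subset_Icc (by omega) (by omega)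
  rw [Finset.sum_set_coe (f := fun j : ℤ => (m + 1 - j.natAbs) / 2) (uIndex (m + 1)),
    Set.toFinset_Icc, Finset.sum_subset hsub, sum_Icc_neg_eq_sum_range,
    ← Fin.sum_univ_eq_sum_range
      (fun i : ℕ => (m + 1 - (i : ℤ).natAbs) / 2 + (m + 1 - (-(i + 1 : ℤ)).natAbs) / 2) m,
    ← Equiv.sum_comp Fin.revPerm]
  · refine Finset.sum_congr rfl fun i _ => ?_
    simp only [Fin.revPerm_apply, Fin.val_rev]
    omega
  · intro j hj hj'
    simp only [Finset.mem_Icc] at hj hj'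
    omega

omit [Field F] in
theorem card_uBound_mul_card :
    Fintype.card (∀ j, Fin (uBound F (m + 1) j)) * Fintype.card (∀ i : Fin m, Fin (q ^ (i : ℕ))) =
      Fintype.card (∀ c, Fin (q ^ frobExp m c)) := by
  rw [Fintype.card_pi, Fintype.card_pi, Fintype.card_pi, Fintype.prod_sum_type]
  simp only [Fintype.card_fin]
  simp only [uBound, frobExp, Sum.elim_inl, Sum.elim_inr,
    Finset.prod_pow_eq_pow_sum, sum_uIndex_succ]

theorem uInv_frobPairing {i j : ℕ} (h : i + j < m) :
    ∃ l : uIndex (m + 1), frobPairing F m i j = uInv F m l ^ q ^ min i j :=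
  ⟨⟨i - j, by omega, by omega⟩, frobPairing_eq_uInv_pow F m i j⟩

section FractionField

variable {k L : Type*} [Field k] [Field L] [Algebra k L] [Algebra (frobOrbitAlgebra F m) k]
  [Algebra (CoordRing F m) L] [IsScalarTower (frobOrbitAlgebra F m) k L]

/-- The polynomials contained in an intermediate field of `L / k`. -/
noncomputable def polynomialsIn (K : IntermediateField k L) : Subalgebra F (CoordRing F m) :=
  ((K.toSubalgebra.restrictScalars (frobOrbitAlgebra F m)).comap
    (IsScalarTower.toAlgHom (frobOrbitAlgebra F m) (CoordRing F m) L)).restrictScalars F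

theorem mem_polynomialsIn {K : IntermediateField k L} {a : CoordRing F m} :
    a ∈ polynomialsIn F m K ↔ algebraMap (CoordRing F m) L a ∈ K := Iff.rfl

theorem frobOrbitAlgebra_le_polynomialsIn (K : IntermediateField k L) :
    frobOrbitAlgebra F m ≤ polynomialsIn F m K := fun a ha => by
  rw [mem_polynomialsIn]
  have h : algebraMap (CoordRing F m) L a = algebraMap k L
      (algebraMap (frobOrbitAlgebra F m) k ⟨a, ha⟩) := by
    rw [← IsScalarTower.algebraMap_apply, IsScalarTower.algebraMap_apply _ (CoordRing F m) L]
    rfl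
  rw [h]
  exact K.algebraMap_mem _

variable [IsFractionRing (CoordRing F m) L]

theorem polynomialsIn_div (K : IntermediateField k L) (a b : CoordRing F m)
    (hab : a * b ∈ polynomialsIn F m K) (hb : b ∈ polynomialsIn F m K) (hb0 : b ≠ 0) :
    a ∈ polynomialsIn F m K := by
  rw [mem_polynomialsIn] at *
  have hb0' := (map_ne_zero_iff _ (IsFractionRing.injective (CoordRing F m) L)).mpr hb0
  rw [map_mul] at hab
  exact mul_div_cancel_right₀ (algebraMap _ L a) hb0' ▸ div_mem hab hb

theorem eq_top_of_polynomialsIn_eq_top {K : IntermediateField k L}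
    (h : polynomialsIn F m K = ⊤) : K = ⊤ := by
  refine eq_top_iff.mpr fun z _ => ?_
  obtain ⟨a, b, -, rfl⟩ := IsFractionRing.div_surjective (A := CoordRing F m) z
  have hmem (c : CoordRing F m) : algebraMap _ L c ∈ K :=
    (mem_polynomialsIn F m).mp (h ▸ Algebra.mem_top)
  exact div_mem (hmem a) (hmem b)

theorem span_boxMonomial_eq_top {K : IntermediateField k L}
    (hpair : ∀ i j, i + j < m → frobPairing F m i j ∈ polynomialsIn F m K) :
    Submodule.span K (Set.range (boxMonomial (fun i : Fin m => q ^ (i : ℕ))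
      fun i => algebraMap (CoordRing F m) L (X (Sum.inl i)))) = ⊤ := by
  have hX := orbitX_mem_of_div F m (polynomialsIn F m K) (polynomialsIn_div F m K) hpair
    fun i => frobOrbitAlgebra_le_polynomialsIn F m K (orbitY_mem_frobOrbitAlgebra F m i)
  set x : Fin m → L := fun i => algebraMap (CoordRing F m) L (X (Sum.inl i))
  have hbox : Subalgebra.toSubmodule (Algebra.adjoin K (Set.range x)) ≤
      Submodule.span K (Set.range (boxMonomial (fun i : Fin m => q ^ (i : ℕ)) x)) := by
    refine adjoin_range_le_span_boxMonomial x _ (fun _ => 1) fun i => ?_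
    obtain ⟨c, hc, hci, -, hexpand⟩ :=
      exists_subspacePoly_eq_sum (polynomialsIn F m K) (xVar F m) i fun j _ => hX j
    have hxi := congrArg (algebraMap (CoordRing F m) L) (hexpand (X (Sum.inl i)))
    rw [Finset.sum_range_succ, hci, one_mul, map_add, map_pow, ← sub_eq_iff_eq_add', map_sum] at hxi
    have hsmul {a : CoordRing F m} (ha : a ∈ polynomialsIn F m K) {r : ℕ} (hr : r < q ^ (i : ℕ)) :
        algebraMap _ L a * x i ^ r ∈ Submodule.span K
          {y | ∃ l r, r * 1 < q ^ (i : ℕ) * 1 ∧ y = x l ^ r} :=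
      Submodule.smul_mem _ (⟨_, ha⟩ : K) (Submodule.subset_span ⟨i, r, by omega, rfl⟩)
    rw [← hxi]
    refine sub_mem ?_ (sum_mem fun j hj => ?_)
    · rw [← xVar_val, ← mul_one (algebraMap _ L _), ← pow_zero (x i)]
      exact hsmul (hX i) (pow_pos Fintype.card_pos _)
    · rw [map_mul, map_pow]
      exact hsmul (hc j) (Nat.pow_lt_pow_right Fintype.one_lt_card (Finset.mem_range.mp hj))
  let E : IntermediateField K L := (Algebra.adjoin K (Set.range x)).toIntermediateField
    fun _ => inv_mem_of_le_span _ _ hbox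
  have hE : E.restrictScalars k = ⊤ := by
    refine eq_top_of_polynomialsIn_eq_top F m (eq_top_of_div F m _ (polynomialsIn_div F m _) ?_ ?_)
    · intro i hi
      exact E.algebraMap_mem ⟨_, hpair i 0 hi⟩
    · exact fun i => Algebra.subset_adjoin ⟨i, rfl⟩
  rw [eq_top_iff]
  intro z _
  have : z ∈ E.restrictScalars k := hE ▸ IntermediateField.mem_top
  exact hbox this

theorem linearIndependent_boxMonomial_algebraMap_uInv [IsFractionRing (frobOrbitAlgebra F m) k] :
    LinearIndependent k
      (boxMonomial (uBound F (m + 1)) fun j => algebraMap (CoordRing F m) L (uInv F m j)) := by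
  have hlift {a : CoordRing F m} {Y : Set (CoordRing F m)}
      (ha : a ∈ Submodule.span (frobOrbitAlgebra F m) Y) :
      algebraMap _ L a ∈ Submodule.span k (algebraMap (CoordRing F m) L '' Y) :=
    map_mem_span_image _ (fun b => ⟨algebraMap _ k b, IsScalarTower.algebraMap_apply _ k L b⟩) ha
  set u : uIndex (m + 1) → L := fun j => algebraMap (CoordRing F m) L (uInv F m j)
  have hbox : Subalgebra.toSubmodule (Algebra.adjoin k (Set.range u)) ≤
      Submodule.span k (Set.range (boxMonomial (uBound F (m + 1)) u)) := by
    refine adjoin_range_le_span_boxMonomial u _ (fun l => q ^ l.val.natAbs + 1) fun j => ?_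
    rw [← map_pow]
    refine Submodule.span_mono ?_ (hlift (uInv_pow_uBound_mem_span_frobOrbitAlgebra F m j))
    rintro _ ⟨_, ⟨l, r, hlt, rfl⟩, rfl⟩
    exact ⟨l, r, hlt, map_pow _ _ _⟩
  let K : IntermediateField k L := (Algebra.adjoin k (Set.range u)).toIntermediateField
    fun _ => inv_mem_of_le_span _ _ hbox
  have hpair (i j : ℕ) (hij : i + j < m) : frobPairing F m i j ∈ polynomialsIn F m K := by
    obtain ⟨l, hl⟩ := uInv_frobPairing F m hij
    have hu : uInv F m l ∈ polynomialsIn F m K :=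
      (mem_polynomialsIn F m).mpr (Algebra.subset_adjoin ⟨l, rfl⟩)
    exact hl ▸ pow_mem hu _
  have hfrob : LinearIndependent k (algebraMap (CoordRing F m) L ∘ frobBox F m) := by
    rw [← LinearIndependent.iff_fractionRing (frobOrbitAlgebra F m) k]
    exact (linearIndependent_frobBox F m).map_injOn
      (IsScalarTower.toAlgHom (frobOrbitAlgebra F m) (CoordRing F m) L).toLinearMap
      (IsFractionRing.injective (CoordRing F m) L).injOn
  have : Nonempty (∀ i : Fin m, Fin (q ^ (i : ℕ))) :=
    ⟨fun _ => ⟨0, pow_pos Fintype.card_pos _⟩⟩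
  exact linearIndependent_of_card_mul_card_le K hbox (span_boxMonomial_eq_top F m hpair) hfrob
    (card_uBound_mul_card F m).le

end FractionField

theorem linearIndependent_boxMonomial_uInv :
    LinearIndependent (frobOrbitAlgebra F m)
      (boxMonomial (uBound F (m + 1)) fun j => uInv F m j) := by
  refine linearIndependent_of_forall_fractionField (frobOrbitAlgebra F m) fun k L => ?_
  intros
  have hcomp : (algebraMap _ L ∘ boxMonomial (uBound F (m + 1)) fun j => uInv F m j) =
      boxMonomial (uBound F (m + 1)) fun j => algebraMap _ L (uInv F m j) := by
    ext e
    simp only [boxMonomial, Function.comp_apply, map_prod, map_pow]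
  exact hcomp ▸ linearIndependent_boxMonomial_algebraMap_uInv F m

end Independence
/-! ### Division by `x_1` -/

section Division

variable (m : ℕ)

/-- The map from a polynomial ring onto `F[f_2, …, f_{m+1}, f_1^*, …, f_{m+1}^*]`, with the
polynomial variable sent to `f_{m+1}^*`. -/
noncomputable def liftOrbit :
    Polynomial (MvPolynomial (Fin m ⊕ Fin m) F) →ₐ[F] CoordRing F (m + 1) :=
  Polynomial.aevalTower
    (aeval (Sum.elim (fun i => orbitX F (m + 1) (i + 1)) fun i => orbitY F (m + 1) i))
    (orbitY F (m + 1) m)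

theorem liftOrbit_mem (R : Polynomial (MvPolynomial (Fin m ⊕ Fin m) F)) :
    liftOrbit F m R ∈ orbitAlgebra F (m + 1) := by
  change Polynomial.eval₂ _ _ R ∈ _
  rw [Polynomial.eval₂_eq_sum_range]
  refine sum_mem fun k _ => mul_mem ?_ (pow_mem (orbitY_mem_orbitAlgebra F _ m) k)
  refine Algebra.adjoin_le ?_ ((aeval_range _).le (AlgHom.mem_range_self _ (R.coeff k)))
  rintro _ ⟨i | i, rfl⟩
  exacts [orbitX_mem_orbitAlgebra F _ _, orbitY_mem_orbitAlgebra F _ _]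

theorem modX0_liftOrbit (R : Polynomial (MvPolynomial (Fin m ⊕ Fin m) F)) :
    modX0 F m (liftOrbit F m R) =
      (R.map (aeval (frobOrbitPoly F m) : _ →ₐ[F] CoordRing F m)).comp (lastOrbit F m) := by
  have hhom : (modX0 F m).toRingHom.comp (liftOrbit F m).toRingHom =
      (Polynomial.compRingHom (lastOrbit F m)).comp
        (Polynomial.mapRingHom (aeval (frobOrbitPoly F m)).toRingHom) := by
    refine Polynomial.ringHom_ext' (ringHom_ext (fun c => ?_) ?_) ?_
    · simp [liftOrbit, MvPolynomial.algHom_C]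
    · rintro (i | i)
      · simp [liftOrbit, frobOrbitPoly, modX0_orbitX_succ]
      · simp [liftOrbit, frobOrbitPoly, modX0_orbitY F m i.2]
    · simp [liftOrbit, modX0_orbitY_last]
  exact RingHom.congr_fun hhom R

theorem exists_eq_xVar_mul_add_liftOrbit {a : CoordRing F (m + 1)}
    (ha : a ∈ orbitAlgebra F (m + 1)) :
    ∃ b ∈ orbitAlgebra F (m + 1), ∃ R, a = xVar F (m + 1) 0 * b + liftOrbit F m R := by
  induction ha using Algebra.adjoin_induction with
  | mem a ha =>
    rcases ha with ⟨⟨_ | i, hi⟩ | ⟨i, hi⟩, rfl⟩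
    · exact ⟨1, one_mem _, 0, by simp [orbitPoly, orbitX]⟩
    · exact ⟨0, zero_mem _, Polynomial.C (X (Sum.inl ⟨i, by omega⟩)),
        by simp [orbitPoly, liftOrbit]⟩
    · rcases Nat.lt_succ_iff_lt_or_eq.mp hi with h | rfl
      · exact ⟨0, zero_mem _, Polynomial.C (X (Sum.inr ⟨i, h⟩)), by simp [orbitPoly, liftOrbit]⟩
      · exact ⟨0, zero_mem _, Polynomial.X, by simp [orbitPoly, liftOrbit]⟩
  | algebraMap c =>
    exact ⟨0, zero_mem _, algebraMap F _ c, by rw [mul_zero, zero_add, AlgHom.commutes]⟩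
  | add a a' _ _ ha ha' =>
    obtain ⟨b, hb, R, rfl⟩ := ha
    obtain ⟨b', hb', R', rfl⟩ := ha'
    exact ⟨b + b', add_mem hb hb', R + R', by rw [map_add]; ring⟩
  | mul a a' _ ha₀ ha ha' =>
    obtain ⟨b, hb, R, rfl⟩ := ha
    obtain ⟨b', hb', R', rfl⟩ := ha'
    exact ⟨b * (xVar F (m + 1) 0 * b' + liftOrbit F m R') + liftOrbit F m R * b',
      add_mem (mul_mem hb ha₀) (mul_mem (liftOrbit_mem F m R) hb'), R * R',
      by rw [map_mul]; ring⟩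

theorem modX0_boxMonomial (e : ∀ j, Fin (uBound F (m + 1) j)) :
    modX0 F m (boxMonomial (uBound F (m + 1)) (fun j => uInv F (m + 1) j) e) =
      Polynomial.C (boxMonomial (uBound F (m + 1)) (fun j => uInv F m j) e) := by
  simp only [boxMonomial, map_prod, map_pow, modX0_uInv]

theorem eq_zero_of_sum_map_mul_C_eq_zero
    {R : (∀ j, Fin (uBound F (m + 1) j)) → Polynomial (MvPolynomial (Fin m ⊕ Fin m) F)}
    (hR : ∑ e, (R e).map (aeval (frobOrbitPoly F m) : _ →ₐ[F] CoordRing F m) *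
      Polynomial.C (boxMonomial (uBound F (m + 1)) (fun j => uInv F m j) e) = 0) : R = 0 := by
  have hmem (c : MvPolynomial (Fin m ⊕ Fin m) F) :
      aeval (frobOrbitPoly F m) c ∈ frobOrbitAlgebra F m := by
    rw [frobOrbitAlgebra, Algebra.adjoin_range_eq_range_aeval]
    exact AlgHom.mem_range_self _ c
  funext e
  ext1 k
  have hk := congrArg (Polynomial.coeff · k) hR
  simp only [Polynomial.finsetSum_coeff, Polynomial.coeff_mul_C, Polynomial.coeff_map,
    Polynomial.coeff_zero] at hk
  have hcoeff := Fintype.linearIndependent_iff.mp (linearIndependent_boxMonomial_uInv F m)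
    (fun e => ⟨_, hmem ((R e).coeff k)⟩) hk e
  exact (map_eq_zero_iff _ (algebraicIndependent_frobOrbitPoly F m)).mp
    (congrArg Subtype.val hcoeff)

theorem exists_eq_xVar_mul_of_modX0_eq_zero {a : CoordRing F (m + 1)}
    (ha : a ∈ generatedAlgebra F (m + 1)) (hmod : modX0 F m a = 0) :
    ∃ b ∈ generatedAlgebra F (m + 1), a = xVar F (m + 1) 0 * b := by
  obtain ⟨c, rfl⟩ :=
    (Submodule.mem_span_range_iff_exists_fun _).mp (generatedAlgebra_le_span F (m + 1) ha)
  choose b hb R hbR using fun e => exists_eq_xVar_mul_add_liftOrbit F m (c e).2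
  set u := boxMonomial (uBound F (m + 1)) fun j => uInv F (m + 1) j
  have hsum : ∑ e, c e • u e =
      xVar F (m + 1) 0 * ∑ e, b e * u e + ∑ e, liftOrbit F m (R e) * u e := by
    simp only [Finset.mul_sum, ← Finset.sum_add_distrib, Subalgebra.smul_def, smul_eq_mul, hbR]
    exact Finset.sum_congr rfl fun e _ => by ring
  have hR : R = 0 := by
    refine eq_zero_of_sum_map_mul_C_eq_zero F m (eq_zero_of_comp_lastOrbit_eq_zero F m ?_)
    rw [hsum, map_add, map_mul, modX0_xVar_zero, zero_mul, zero_add, map_sum] at hmod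
    simpa only [u, map_mul, modX0_liftOrbit, modX0_boxMonomial, Polynomial.sum_comp,
      Polynomial.mul_comp, Polynomial.C_comp] using hmod
  refine ⟨∑ e, b e * u e, sum_mem fun e _ => mul_mem
    (orbitAlgebra_le_generatedAlgebra F _ (hb e)) (prod_mem fun j _ => pow_mem
      (uInv_mem_generatedAlgebra_of_mem F _ j.2) _), ?_⟩
  simpa only [hR, Pi.zero_apply, map_zero, zero_mul, Finset.sum_const_zero, add_zero] using hsum

theorem mem_generatedAlgebra_of_xVar_pow_mul_mem {k : ℕ} {a : CoordRing F (m + 1)}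
    (ha : xVar F (m + 1) 0 ^ k * a ∈ generatedAlgebra F (m + 1)) :
    a ∈ generatedAlgebra F (m + 1) := by
  induction k with
  | zero => simpa using ha
  | succ k ih =>
    refine ih ?_
    rw [pow_succ', mul_assoc] at ha
    obtain ⟨b, hb, hab⟩ := exists_eq_xVar_mul_of_modX0_eq_zero F m ha
      (by rw [map_mul, modX0_xVar_zero, zero_mul])
    rwa [mul_left_cancel₀ (orbitX_ne_zero F (n := m + 1) m.succ_pos) hab]

end Division
/-! ### Eliminating a generator by transvections -/

section Elimination

variable {K R : Type*} [Field K] [Fintype K] [CommRing R] [Algebra K R]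

local notation "q" => Fintype.card K

theorem exists_natDegree_lt_aeval_eq {A S : Type*} [CommRing A] [CommRing S] [Algebra A S] {t g : S}
    {Q : Polynomial A} (hQ : Q.Monic) (hQ1 : Q ≠ 1) (hQt : Polynomial.aeval t Q = 0)
    (hg : g ∈ Algebra.adjoin A {t}) :
    ∃ P : Polynomial A, P.natDegree < Q.natDegree ∧ Polynomial.aeval t P = g := by
  rw [Algebra.adjoin_singleton_eq_range_aeval] at hg
  obtain ⟨P, rfl⟩ := hg
  exact ⟨P %ₘ Q, Polynomial.natDegree_modByMonic_lt P hQ hQ1,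
    Polynomial.aeval_modByMonic_eq_self_of_root hQt⟩

theorem exists_natDegree_lt_card_aeval_eq [Nontrivial R] {B : Subalgebra K R} {t c g : R}
    (hc : c ∈ B) (ht : t ^ q - c ^ (q - 1) * t ∈ B) (hg : g ∈ Algebra.adjoin B {t}) :
    ∃ P : Polynomial B, P.natDegree < q ∧ Polynomial.aeval t P = g := by
  set a : B := ⟨c, hc⟩ ^ (q - 1)
  set b : B := ⟨_, ht⟩
  have hdeg : (Polynomial.C a * Polynomial.X + Polynomial.C b).degree < (q : WithBot ℕ) :=
    Polynomial.degree_linear_le.trans_lt (by exact_mod_cast Fintype.one_lt_card)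
  have hQ := Polynomial.monic_X_pow_sub hdeg
  have hQdeg : (Polynomial.X ^ q - (Polynomial.C a * Polynomial.X + Polynomial.C b)).natDegree =
      q := by
    refine Polynomial.natDegree_eq_of_degree_eq_some ?_
    rw [Polynomial.degree_sub_eq_left_of_degree_lt (by rwa [Polynomial.degree_X_pow]),
      Polynomial.degree_X_pow]
  rw [← hQdeg]
  refine exists_natDegree_lt_aeval_eq hQ (fun h => ?_) ?_ hg
  · rw [h, Polynomial.natDegree_one] at hQdeg
    exact Fintype.card_ne_zero hQdeg.symm
  · simp [a, b]

-- Write `g = P(t)` with `P` of degree less than `q`; then `P - g` vanishes at all `t + α c`.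
theorem mem_of_mem_adjoin_singleton_of_invariant [IsDomain R] {B : Subalgebra K R} {t c g : R}
    (hc : c ∈ B) (hc0 : c ≠ 0) (ht : t ^ q - c ^ (q - 1) * t ∈ B) {φ : K → R →ₐ[K] R}
    (hφB : ∀ α, ∀ x ∈ B, φ α x = x) (hφt : ∀ α, φ α t = t + algebraMap K R α * c)
    (hg : g ∈ Algebra.adjoin B {t}) (hinv : ∀ α, φ α g = g) : g ∈ B := by
  obtain ⟨P, hPdeg, rfl⟩ := exists_natDegree_lt_card_aeval_eq hc ht hg
  have heval (α : K) : (P.map (algebraMap B R)).eval (t + algebraMap K R α * c) =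
      Polynomial.aeval t P := by
    have hcomp : (φ α : R →+* R).comp (algebraMap B R) = algebraMap B R :=
      RingHom.ext fun x => hφB α x x.2
    rw [← hinv α, ← hφt, Polynomial.eval_map, Polynomial.aeval_def, ← RingHom.coe_coe (φ α),
      Polynomial.hom_eval₂, hcomp]
  have hP : P.map (algebraMap B R) - Polynomial.C (Polynomial.aeval t P) = 0 := by
    refine Polynomial.eq_zero_of_natDegree_lt_card_of_eval_eq_zero _
      (f := fun α : K => t + algebraMap K R α * c)
      (fun α β h => (algebraMap K R).injective (mul_right_cancel₀ hc0 (add_left_cancel h)))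
      (fun α => by rw [Polynomial.eval_sub, Polynomial.eval_C, heval, sub_self]) ?_
    rw [Polynomial.natDegree_sub_C]
    exact Polynomial.natDegree_map_le.trans_lt hPdeg
  have hcoeff := congrArg (Polynomial.coeff · 0) (sub_eq_zero.mp hP)
  simp only [Polynomial.coeff_map, Polynomial.coeff_C_zero] at hcoeff
  exact hcoeff ▸ (P.coeff 0).2

theorem mem_adjoin_of_mem_adjoin_union_image_of_invariant [IsDomain R] {ι : Type*} {s : Set R}
    {t : ι → R} {c g : R} (hc : c ∈ s) (hc0 : c ≠ 0)
    (ht : ∀ i, t i ^ q - c ^ (q - 1) * t i ∈ s) {φ : ι → K → R →ₐ[K] R}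
    (hφs : ∀ i α, ∀ x ∈ s, φ i α x = x) (hφt : ∀ i α, φ i α (t i) = t i + algebraMap K R α * c)
    (hφ : ∀ i j α, j ≠ i → φ i α (t j) = t j) (I : Finset ι)
    (hg : g ∈ Algebra.adjoin K (s ∪ t '' I)) (hinv : ∀ i α, φ i α g = g) :
    g ∈ Algebra.adjoin K s := by
  classical
  induction I using Finset.induction_on with
  | empty => simpa using hg
  | insert i I hi ih =>
    refine ih ?_
    have hs : s ⊆ Algebra.adjoin K (s ∪ t '' I) :=
      Set.subset_union_left.trans Algebra.subset_adjoin
    rw [Finset.coe_insert, Set.image_insert_eq, ← Set.union_singleton, ← Set.union_assoc,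
      Algebra.adjoin_union_eq_adjoin_adjoin] at hg
    refine mem_of_mem_adjoin_singleton_of_invariant (hs hc) hc0 (hs (ht i)) (fun α => ?_) (hφt i)
      hg (hinv i)
    refine Algebra.adjoin_le (S := AlgHom.equalizer (φ i α) (AlgHom.id K R)) ?_
    rintro _ (hx | ⟨j, hj, rfl⟩)
    exacts [hφs i α _ hx, hφ i j α (ne_of_mem_of_not_mem hj hi)]

end Elimination
/-! ### The action of upper unipotent matrices -/

section Action

local notation "q" => Fintype.card F

variable {n}

omit [Fintype F] in
theorem gact_X_inl (σ : GL (Fin n) F) (k : Fin n) :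
    gact F n σ (X (Sum.inl k)) =
      ∑ i, C ((σ : Matrix (Fin n) (Fin n) F) i k) * X (Sum.inl i) := by
  simp only [gact, aeval_X, Sum.elim_inl]

omit [Fintype F] in
theorem gact_X_inr (σ : GL (Fin n) F) (k : Fin n) :
    gact F n σ (X (Sum.inr k)) =
      ∑ i, C ((↑σ⁻¹ : Matrix (Fin n) (Fin n) F) k i) * X (Sum.inr i) := by
  simp only [gact, aeval_X, Sum.elim_inr]

variable {F} in
theorem sum_C_mul_pow_card_pow {ι τ : Type*} (s : Finset ι) (a : ι → F)
    (v : ι → MvPolynomial τ F) (i : ℕ) :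
    (∑ k ∈ s, C (a k) * v k) ^ q ^ i = ∑ k ∈ s, C (a k) * v k ^ q ^ i := by
  simp only [← frobeniusAlgHom_pow_apply (K := F), map_sum, map_mul, MvPolynomial.algHom_C,
    MvPolynomial.algebraMap_eq]

theorem gact_frobPairing (σ : GL (Fin n) F) (i j : ℕ) :
    gact F n σ (frobPairing F n i j) = frobPairing F n i j := by
  set A : Matrix (Fin n) (Fin n) (CoordRing F n) := (σ : Matrix (Fin n) (Fin n) F).map C
  set B : Matrix (Fin n) (Fin n) (CoordRing F n) := (↑σ⁻¹ : Matrix (Fin n) (Fin n) F).map C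
  set x : Fin n → CoordRing F n := fun k => X (Sum.inl k) ^ q ^ i
  set y : Fin n → CoordRing F n := fun k => X (Sum.inr k) ^ q ^ j
  have hx : (fun k => gact F n σ (x k)) = x ᵥ* A := funext fun k => by
    simp only [x, A, map_pow, gact_X_inl, sum_C_mul_pow_card_pow, vecMul, dotProduct,
      Matrix.map_apply]
    exact Finset.sum_congr rfl fun l _ => mul_comm _ _
  have hy : (fun k => gact F n σ (y k)) = B *ᵥ y := funext fun k => by
    simp only [y, B, map_pow, gact_X_inr, sum_C_mul_pow_card_pow, mulVec, dotProduct,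
      Matrix.map_apply]
  have hAB : A * B = 1 := by
    rw [← Matrix.map_mul, Units.mul_inv, Matrix.map_one _ C_0 C_1]
  calc gact F n σ (x ⬝ᵥ y) = (x ᵥ* A) ⬝ᵥ (B *ᵥ y) := by
        rw [← hx, ← hy]; simp only [dotProduct, map_sum, map_mul]
    _ = x ⬝ᵥ y := by rw [dotProduct_mulVec, vecMul_vecMul, hAB, vecMul_one]

theorem gact_uInv (σ : GL (Fin n) F) (j : ℤ) : gact F n σ (uInv F n j) = uInv F n j := by
  obtain ⟨k, rfl | rfl⟩ := j.eq_nat_or_neg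
  · rw [uInv_natCast, gact_frobPairing]
  · rw [uInv_neg_natCast, gact_frobPairing]

variable {F}

omit [Fintype F] in
theorem isUpperUnipotent_inv {σ : GL (Fin n) F} (hσ : isUpperUnipotent F n σ) :
    isUpperUnipotent F n σ⁻¹ := by
  have htri : (↑σ⁻¹ : Matrix (Fin n) (Fin n) F).BlockTriangular id := by
    have : Invertible (σ : Matrix (Fin n) (Fin n) F) := σ.invertible
    rw [Matrix.coe_units_inv]
    exact Matrix.blockTriangular_inv_of_blockTriangular fun i j hij => hσ.2 i j hij
  refine ⟨fun i => ?_, fun i j hij => htri hij⟩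
  have hdiag : ((σ : Matrix (Fin n) (Fin n) F) * (σ⁻¹ : GL (Fin n) F)) i i = 1 := by
    rw [Units.mul_inv, Matrix.one_apply_eq]
  have hzero (k : Fin n) (hk : k ≠ i) :
      (σ : Matrix (Fin n) (Fin n) F) i k * (↑σ⁻¹ : Matrix (Fin n) (Fin n) F) k i = 0 := by
    rcases lt_or_gt_of_ne hk with hk | hk
    · rw [hσ.2 i k hk, zero_mul]
    · rw [htri hk, mul_zero]
  rwa [Matrix.mul_apply, Finset.sum_eq_single_of_mem i (Finset.mem_univ i) fun k _ => hzero k,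
    hσ.1, one_mul] at hdiag

theorem gact_orbitX {σ : GL (Fin n) F} (hσ : isUpperUnipotent F n σ) (i : ℕ) :
    gact F n σ (orbitX F n i) = orbitX F n i := by
  refine map_subspacePoly_self_of_sub_mem_span _ _ (fun i => ?_) i
  by_cases hi : i < n
  · obtain ⟨k, rfl⟩ : ∃ k : Fin n, i = k := ⟨⟨i, hi⟩, rfl⟩
    rw [xVar_val, gact_X_inl, ← Finset.add_sum_erase _ _ (Finset.mem_univ k), hσ.1, C_1, one_mul,
      add_sub_cancel_left]
    refine sum_mem fun l hl => ?_
    rcases lt_or_gt_of_ne (Finset.ne_of_mem_erase hl) with h | h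
    · rw [← smul_eq_C_mul]
      exact Submodule.smul_mem _ _ (Submodule.subset_span ⟨l, h, xVar_val F n l⟩)
    · rw [hσ.2 _ _ h, C_0, zero_mul]
      exact zero_mem _
  · simp only [xVar, dif_neg hi, map_zero, sub_zero, zero_mem]

theorem gact_orbitY {σ : GL (Fin n) F} (hσ : isUpperUnipotent F n σ) (i : ℕ) :
    gact F n σ (orbitY F n i) = orbitY F n i := by
  refine map_subspacePoly_self_of_sub_mem_span _ _ (fun i => ?_) i
  have hinv := isUpperUnipotent_inv hσ
  by_cases hi : i < n
  · obtain ⟨k, rfl⟩ : ∃ k : Fin n, i = k.rev := ⟨Fin.rev ⟨i, hi⟩, by rw [Fin.rev_rev]⟩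
    rw [yVar_rev, gact_X_inr, ← Finset.add_sum_erase _ _ (Finset.mem_univ k), hinv.1, C_1, one_mul,
      add_sub_cancel_left]
    refine sum_mem fun l hl => ?_
    rcases lt_or_gt_of_ne (Finset.ne_of_mem_erase hl) with h | h
    · rw [hinv.2 _ _ h, C_0, zero_mul]
      exact zero_mem _
    · rw [← smul_eq_C_mul]
      exact Submodule.smul_mem _ _
        (Submodule.subset_span ⟨l.rev, Fin.rev_lt_rev.mpr h, yVar_rev F n l⟩)
  · simp only [yVar, dif_neg hi, map_zero, sub_zero, zero_mem]

theorem gact_eq_self_of_mem_generatedAlgebra {σ : GL (Fin n) F} (hσ : isUpperUnipotent F n σ)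
    {p : CoordRing F n} (hp : p ∈ generatedAlgebra F n) : gact F n σ p = p := by
  refine Algebra.adjoin_le (S := AlgHom.equalizer (gact F n σ) (AlgHom.id F _)) ?_ hp
  rintro _ ((⟨i, rfl⟩ | ⟨i, rfl⟩) | ⟨j, _, rfl⟩)
  · simpa [fX_succ F n i.2] using gact_orbitX hσ i
  · simpa [fY_succ F n i.2] using gact_orbitY hσ i
  · exact gact_uInv F σ j

/-- The action on `F[V ⊕ V*]` of the transvection `1 + α E_{ij}`, which maps `x_j` to
`x_j + α x_i` and `y_i` to `y_i - α y_j`. -/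
noncomputable def transvectionAct {i j : Fin n} (hij : i ≠ j) (α : F) :
    CoordRing F n →ₐ[F] CoordRing F n :=
  gact F n (SpecialLinearGroup.transvection hij α)

omit [Fintype F] in
theorem coe_transvection_toGL {i j : Fin n} (hij : i ≠ j) (α : F) :
    (SpecialLinearGroup.toGL (SpecialLinearGroup.transvection hij α) : Matrix (Fin n) (Fin n) F) =
      1 + Matrix.single i j α := rfl

omit [Fintype F] in
theorem coe_transvection_toGL_inv {i j : Fin n} (hij : i ≠ j) (α : F) :
    (↑(SpecialLinearGroup.toGL (SpecialLinearGroup.transvection hij α))⁻¹ :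
      Matrix (Fin n) (Fin n) F) = 1 + Matrix.single i j (-α) := by
  rw [← map_inv, SpecialLinearGroup.transvection_inv, coe_transvection_toGL]

omit [Fintype F] in
theorem isUpperUnipotent_transvection {i j : Fin n} (hij : i < j) (α : F) :
    isUpperUnipotent F n (SpecialLinearGroup.transvection hij.ne α) := by
  rw [isUpperUnipotent, coe_transvection_toGL]
  refine ⟨fun k => ?_, fun k l hkl => ?_⟩
  · rw [Matrix.add_apply, Matrix.one_apply_eq,
      Matrix.single_apply_of_ne _ _ _ _ _ (by rintro ⟨rfl, rfl⟩; exact hij.false), add_zero]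
  · rw [Matrix.add_apply, Matrix.one_apply_ne hkl.ne',
      Matrix.single_apply_of_ne _ _ _ _ _ (by rintro ⟨rfl, rfl⟩; exact hij.asymm hkl), add_zero]

omit [Fintype F] in
theorem transvectionAct_X_inl {i j : Fin n} (hij : i ≠ j) (α : F) (k : Fin n) :
    transvectionAct hij α (X (Sum.inl k)) =
      X (Sum.inl k) + if k = j then C α * X (Sum.inl i) else 0 := by
  rw [transvectionAct, gact_X_inl, coe_transvection_toGL]
  simp [Matrix.one_apply, Matrix.single_apply, add_mul, Finset.sum_add_distrib, ite_and,
    eq_comm (a := j), apply_ite C]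

omit [Fintype F] in
theorem transvectionAct_X_inr {i j : Fin n} (hij : i ≠ j) (α : F) (k : Fin n) :
    transvectionAct hij α (X (Sum.inr k)) =
      X (Sum.inr k) - if k = i then C α * X (Sum.inr j) else 0 := by
  rw [transvectionAct, gact_X_inr, coe_transvection_toGL_inv]
  simp [Matrix.one_apply, Matrix.single_apply, add_mul, Finset.sum_add_distrib, ite_and,
    eq_comm (a := i), apply_ite C, sub_eq_add_neg, neg_ite]

end Action

/-! ### Descent to `U_{n-1}` -/

section Descent

open scoped MonomialOrder Pointwise

local notation "q" => Fintype.card F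

variable (m : ℕ)

omit [Fintype F] in
theorem xVar_zero : xVar F (m + 1) 0 = X (Sum.inl 0) := xVar_val F (m + 1) 0

/-- The embedding of the coordinate ring of level `m` into that of level `m + 1` that maps `x_i` to
`x_{i+1}^q - x_1^{q-1} x_{i+1}` and `y_i` to `y_{i+1}`. It is equivariant for `U_m`, embedded in
`U_{m+1}` as the stabilizer of `x_1` and `y_1`. -/
noncomputable def shiftEmbedding : CoordRing F m →ₐ[F] CoordRing F (m + 1) :=
  aeval (Sum.elim (fun i => subspacePoly F (xVar F (m + 1)) 1 (X (Sum.inl i.succ)))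
    fun i => X (Sum.inr i.succ))

theorem shiftEmbedding_X_inl (i : Fin m) : shiftEmbedding F m (X (Sum.inl i)) =
    subspacePoly F (xVar F (m + 1)) 1 (X (Sum.inl i.succ)) := by
  rw [shiftEmbedding, aeval_X, Sum.elim_inl]

theorem shiftEmbedding_X_inr (i : Fin m) :
    shiftEmbedding F m (X (Sum.inr i)) = X (Sum.inr i.succ) := by
  rw [shiftEmbedding, aeval_X, Sum.elim_inr]

theorem shiftEmbedding_xVar (i : ℕ) : shiftEmbedding F m (xVar F m i) =
    subspacePoly F (xVar F (m + 1)) 1 (xVar F (m + 1) (i + 1)) := by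
  by_cases hi : i < m
  · rw [xVar_val F m ⟨i, hi⟩, shiftEmbedding_X_inl, ← xVar_val, Fin.val_succ]
  · rw [xVar, dif_neg hi, xVar, dif_neg (by omega), map_zero, map_zero]

theorem shiftEmbedding_yVar {i : ℕ} (hi : i < m) :
    shiftEmbedding F m (yVar F m i) = yVar F (m + 1) i := by
  obtain ⟨k, rfl⟩ : ∃ k : Fin m, i = k.rev := ⟨Fin.rev ⟨i, hi⟩, by rw [Fin.rev_rev]⟩
  rw [yVar_rev, shiftEmbedding_X_inr, ← yVar_rev, Fin.rev_succ, Fin.val_castSucc]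

theorem shiftEmbedding_orbitX (i : ℕ) :
    shiftEmbedding F m (orbitX F m i) = orbitX F (m + 1) (i + 1) := by
  rw [orbitX, orbitX, subspacePoly_succ_eq_comp, map_subspacePoly, shiftEmbedding_xVar,
    subspacePoly_congr fun j _ => shiftEmbedding_xVar F m j]

theorem shiftEmbedding_orbitY {i : ℕ} (hi : i < m) :
    shiftEmbedding F m (orbitY F m i) = orbitY F (m + 1) i := by
  rw [orbitY, map_subspacePoly, shiftEmbedding_yVar F m hi, orbitY,
    subspacePoly_congr fun j hj => shiftEmbedding_yVar F m (hj.trans hi)]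

theorem shiftEmbedding_frobPairing (i j : ℕ) :
    shiftEmbedding F m (frobPairing F m i j) = frobPairing F (m + 1) (i + 1) j -
      xVar F (m + 1) 0 ^ ((q - 1) * q ^ i) * frobPairing F (m + 1) i j := by
  have hexp : (q - 1) * q ^ i + q ^ i = q ^ (i + 1) := by
    rw [← Nat.succ_mul, Nat.succ_eq_add_one, Nat.sub_add_cancel Fintype.card_pos, pow_succ']
  have hzero : (X (Sum.inl 0) ^ q ^ (i + 1) * X (Sum.inr 0) ^ q ^ j -
      X (Sum.inl 0) ^ ((q - 1) * q ^ i) * (X (Sum.inl 0) ^ q ^ i * X (Sum.inr 0) ^ q ^ j) :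
      CoordRing F (m + 1)) = 0 := by
    rw [← mul_assoc, ← pow_add, hexp, sub_self]
  rw [frobPairing, frobPairing, frobPairing, map_sum, Fin.sum_univ_succ, Fin.sum_univ_succ, mul_add,
    xVar_zero, add_sub_add_comm, hzero, zero_add, Finset.mul_sum, ← Finset.sum_sub_distrib]
  refine Finset.sum_congr rfl fun k _ => ?_
  rw [map_mul, map_pow, map_pow, shiftEmbedding_X_inl, shiftEmbedding_X_inr, subspacePoly_one,
    xVar_zero, ← frobeniusAlgHom_pow_apply (K := F) i, map_sub, frobeniusAlgHom_pow_apply,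
    frobeniusAlgHom_pow_apply, mul_pow, ← pow_mul, ← pow_mul, ← pow_succ', sub_mul, mul_assoc]

theorem shiftEmbedding_mem_generatedAlgebra {p : CoordRing F m} (hp : p ∈ generatedAlgebra F m) :
    shiftEmbedding F m p ∈ generatedAlgebra F (m + 1) := by
  have hle := orbitAlgebra_le_generatedAlgebra F (m + 1)
  have hpairing (i j : ℕ) :
      shiftEmbedding F m (frobPairing F m i j) ∈ generatedAlgebra F (m + 1) := by
    rw [shiftEmbedding_frobPairing]
    exact sub_mem (frobPairing_mem_generatedAlgebra F _ _ _)
      (mul_mem (pow_mem (hle (orbitX_mem_orbitAlgebra F (m + 1) 0)) _)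
        (frobPairing_mem_generatedAlgebra F _ _ _))
  refine Algebra.adjoin_le (S := (generatedAlgebra F (m + 1)).comap (shiftEmbedding F m)) ?_ hp
  rintro _ ((⟨i, rfl⟩ | ⟨i, rfl⟩) | ⟨j, _, rfl⟩)
  · change shiftEmbedding F m (fX F m (i + 1)) ∈ generatedAlgebra F (m + 1)
    rw [fX_succ F m i.2, shiftEmbedding_orbitX]
    exact hle (orbitX_mem_orbitAlgebra F _ _)
  · change shiftEmbedding F m (fY F m (i + 1)) ∈ generatedAlgebra F (m + 1)
    rw [fY_succ F m i.2, shiftEmbedding_orbitY F m i.2]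
    exact hle (orbitY_mem_orbitAlgebra F _ _)
  · change shiftEmbedding F m (uInv F m j) ∈ generatedAlgebra F (m + 1)
    obtain ⟨k, rfl | rfl⟩ := j.eq_nat_or_neg
    · rw [uInv_natCast]
      exact hpairing _ _
    · rw [uInv_neg_natCast]
      exact hpairing _ _

variable {m}

omit [Fintype F] in
theorem transvectionAct_X_inl_of_ne {i j : Fin n} (hij : i ≠ j) (α : F) {k : Fin n} (hk : k ≠ j) :
    transvectionAct hij α (X (Sum.inl k)) = X (Sum.inl k) := by
  rw [transvectionAct_X_inl, if_neg hk, add_zero]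

theorem transvectionAct_subspacePoly_one {i j : Fin (m + 1)} (hij : i ≠ j) (hj : j ≠ 0) (α : F)
    (a : CoordRing F (m + 1)) :
    transvectionAct hij α (subspacePoly F (xVar F (m + 1)) 1 a) =
      subspacePoly F (xVar F (m + 1)) 1 (transvectionAct hij α a) := by
  rw [map_subspacePoly, subspacePoly_congr]
  intro k hk
  rw [Nat.lt_one_iff.mp hk, xVar_zero, transvectionAct_X_inl_of_ne F _ _ _ hj.symm]

theorem transvectionAct_shiftEmbedding {i j : Fin m} (hij : i ≠ j) (α : F) (p : CoordRing F m) :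
    transvectionAct (Fin.succ_injective _ |>.ne hij) α (shiftEmbedding F m p) =
      shiftEmbedding F m (transvectionAct hij α p) := by
  refine DFunLike.congr_fun (f := (transvectionAct _ α).comp (shiftEmbedding F m))
    (g := (shiftEmbedding F m).comp (transvectionAct hij α)) (algHom_ext ?_) p
  rintro (k | k)
  · simp only [AlgHom.comp_apply]
    rw [shiftEmbedding_X_inl, transvectionAct_subspacePoly_one F _ (Fin.succ_ne_zero j),
      transvectionAct_X_inl, transvectionAct_X_inl, map_add, map_add, shiftEmbedding_X_inl]
    simp only [Fin.succ_inj, ← smul_eq_C_mul]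
    split_ifs
    · rw [map_smul, map_smul, shiftEmbedding_X_inl]
    · rw [map_zero, map_zero]
  · simp only [AlgHom.comp_apply]
    rw [shiftEmbedding_X_inr, transvectionAct_X_inr, transvectionAct_X_inr, map_sub,
      shiftEmbedding_X_inr]
    simp only [Fin.succ_inj, ← smul_eq_C_mul]
    split_ifs
    · rw [map_smul, shiftEmbedding_X_inr]
    · rw [map_zero]

variable (m)

/-- The evaluation of polynomials in two variables over the coordinate ring of level `m` at
`(x_1, u_0)`, with coefficients embedded by `shiftEmbedding`. -/
noncomputable def shiftEval : MvPolynomial (Fin 2) (CoordRing F m) →ₐ[F] CoordRing F (m + 1) :=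
  aevalTower (shiftEmbedding F m) ![X (Sum.inl 0), uInv F (m + 1) 0]

/-- The generators `x_1, u_0, x_i^q - x_1^{q-1} x_i, y_i` (`1 < i`) of the range of `shiftEval`. -/
noncomputable def shiftGen : Fin 2 ⊕ (Fin m ⊕ Fin m) → CoordRing F (m + 1) :=
  Sum.elim ![X (Sum.inl 0), uInv F (m + 1) 0] fun c => shiftEmbedding F m (X c)

theorem shiftEval_comp_sumAlgEquiv :
    (shiftEval F m).comp (sumAlgEquiv F (Fin 2) (Fin m ⊕ Fin m)).toAlgHom =
      aeval (shiftGen F m) := by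
  refine algHom_ext ?_
  rintro (c | c) <;> simp [shiftEval, shiftGen]

theorem range_shiftEval : (shiftEval F m).range = Algebra.adjoin F (Set.range (shiftGen F m)) := by
  rw [Algebra.adjoin_range_eq_range_aeval, ← shiftEval_comp_sumAlgEquiv]
  exact SetLike.coe_injective ((sumAlgEquiv F _ _).surjective.range_comp (shiftEval F m)).symm

theorem uInv_zero_eq_add_sum : uInv F (m + 1) 0 = X (Sum.inl 0) * X (Sum.inr 0) +
    ∑ k : Fin m, X (Sum.inl k.succ) * X (Sum.inr k.succ) := by
  simp [uInv, Fin.sum_univ_succ]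

theorem degree_uInv_zero : (coordOrder (m + 1)).degree (uInv F (m + 1) 0) =
    Finsupp.single (Sum.inl 0) 1 + Finsupp.single (Sum.inr 0) 1 := by
  have hdeg (k : Fin (m + 1)) : (coordOrder (m + 1)).degree
      (X (Sum.inl k) * X (Sum.inr k) : CoordRing F (m + 1)) =
        Finsupp.single (Sum.inl k) 1 + Finsupp.single (Sum.inr k) 1 := by
    rw [MonomialOrder.degree_mul (X_ne_zero _) (X_ne_zero _), MonomialOrder.degree_X,
      MonomialOrder.degree_X]
  have hlt {d : Fin (m + 1) ⊕ Fin (m + 1) →₀ ℕ} (hd : d (Sum.inr 0) = 0) :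
      d ≺[coordOrder (m + 1)] Finsupp.single (Sum.inl 0) 1 + Finsupp.single (Sum.inr 0) 1 :=
    rankLex_lt varRank_injective (Sum.inr 0) (fun c hc => (Nat.not_lt_zero _ hc).elim)
      (by simp [hd])
  rw [uInv_zero_eq_add_sum, MonomialOrder.degree_add_of_lt, hdeg]
  rw [hdeg]
  refine MonomialOrder.degree_sum_le.trans_lt ((Finset.sup_lt_iff ?_).mpr fun k _ => ?_)
  · rw [MonomialOrder.bot_eq_zero, ← map_zero (coordOrder (m + 1)).toSyn]
    exact hlt rfl
  · rw [hdeg]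
    exact hlt (by simp)

theorem degree_shiftEmbedding_X (c : Fin m ⊕ Fin m) :
    (coordOrder (m + 1)).degree (shiftEmbedding F m (X c)) =
      Finsupp.single (Sum.map Fin.succ Fin.succ c) (Sum.elim (fun _ => q) (fun _ => 1) c) := by
  rcases c with i | i
  · rw [shiftEmbedding_X_inl, ← xVar_val, degree_subspacePoly F (xVar_val F (m + 1))
      strictAnti_varRank_inl 1 (by simp), pow_one]
    rfl
  · rw [shiftEmbedding_X_inr, MonomialOrder.degree_X]
    rfl

theorem shiftGen_ne_zero (c : Fin 2 ⊕ (Fin m ⊕ Fin m)) : shiftGen F m c ≠ 0 := by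
  have hne {p : CoordRing F (m + 1)} {d} (h : (coordOrder (m + 1)).degree p d ≠ 0) : p ≠ 0 := by
    rintro rfl
    rw [MonomialOrder.degree_zero] at h
    exact h rfl
  rcases c with c | c
  · have hu : uInv F (m + 1) 0 ≠ 0 := hne (d := Sum.inl 0) (by simp [degree_uInv_zero])
    exact Fin.forall_fin_two (p := fun c => shiftGen F m (Sum.inl c) ≠ 0) |>.mpr
      ⟨X_ne_zero _, hu⟩ c
  · refine hne (d := Sum.map Fin.succ Fin.succ c) ?_
    rw [shiftGen, Sum.elim_inr, degree_shiftEmbedding_X, Finsupp.single_eq_same]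
    rcases c with _ | _
    · exact Fintype.card_ne_zero
    · exact one_ne_zero

theorem linearCombination_degree_shiftGen (s : Fin 2 ⊕ (Fin m ⊕ Fin m) →₀ ℕ) :
    Finsupp.linearCombination ℕ (fun c => (coordOrder (m + 1)).degree (shiftGen F m c)) s =
      Finsupp.single (Sum.inl 0) (s (Sum.inl 0) + s (Sum.inl 1)) +
        Finsupp.single (Sum.inr 0) (s (Sum.inl 1)) +
        ∑ c, Finsupp.single (Sum.map Fin.succ Fin.succ c)
          (s (Sum.inr c) * Sum.elim (fun _ => q) (fun _ => 1) c) := by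
  rw [Finsupp.linearCombination_apply, Finsupp.sum_fintype _ _ (by simp),
    Fintype.sum_sum_type, Fin.sum_univ_two]
  simp only [shiftGen, Sum.elim_inl, Sum.elim_inr, cons_val_zero, cons_val_one,
    MonomialOrder.degree_X, degree_uInv_zero, degree_shiftEmbedding_X, smul_add,
    Finsupp.smul_single, smul_eq_mul, mul_one, ← add_assoc, Finsupp.single_add]

theorem algebraicIndependent_shiftGen : AlgebraicIndependent F (shiftGen F m) := by
  refine algebraicIndependent_of_linearIndependent_degree (coordOrder (m + 1))
    (shiftGen_ne_zero F m) fun s t hst => ?_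
  rw [linearCombination_degree_shiftGen, linearCombination_degree_shiftGen] at hst
  have hu : s (Sum.inl 1) = t (Sum.inl 1) := by
    simpa [Finsupp.single_apply] using DFunLike.congr_fun hst (Sum.inr 0)
  have hx : s (Sum.inl 0) = t (Sum.inl 0) := by
    simpa [Finsupp.single_apply, hu] using DFunLike.congr_fun hst (Sum.inl 0)
  have hc (c : Fin m ⊕ Fin m) : s (Sum.inr c) = t (Sum.inr c) := by
    rcases c with i | i
    · simpa [Finsupp.single_apply, (Fin.succ_ne_zero _).symm] using
        DFunLike.congr_fun hst (Sum.inl i.succ)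
    · simpa [Finsupp.single_apply, (Fin.succ_ne_zero _).symm] using
        DFunLike.congr_fun hst (Sum.inr i.succ)
  exact Finsupp.ext (Sum.forall.mpr ⟨Fin.forall_fin_two.mpr ⟨hx, hu⟩, hc⟩)

theorem shiftEval_injective : Function.Injective (shiftEval F m) := by
  have hcomp := algebraicIndependent_shiftGen F m
  rw [algebraicIndependent_iff_injective_aeval, ← shiftEval_comp_sumAlgEquiv] at hcomp
  exact (Function.Injective.of_comp_iff' _ (sumAlgEquiv F _ _).bijective).mp hcomp

variable {m}

theorem shiftEval_X (c : Fin 2) : shiftEval F m (X c) = shiftGen F m (Sum.inl c) :=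
  aevalTower_X _ _ c

theorem transvectionAct_shiftGen_inl {i j : Fin (m + 1)} (hij : i ≠ j) (hj : j ≠ 0) (α : F)
    (c : Fin 2) :
    transvectionAct hij α (shiftGen F m (Sum.inl c)) = shiftGen F m (Sum.inl c) := by
  fin_cases c
  · exact transvectionAct_X_inl_of_ne F _ hij α hj.symm
  · exact gact_uInv F _ 0

theorem transvectionAct_shiftEval {i j : Fin m} (hij : i ≠ j) (α : F)
    (P : MvPolynomial (Fin 2) (CoordRing F m)) :
    transvectionAct (Fin.succ_injective _ |>.ne hij) α (shiftEval F m P) =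
      shiftEval F m (mapAlgHom (transvectionAct hij α) P) := by
  induction P using MvPolynomial.induction_on with
  | C a =>
    rw [mapAlgHom_apply, map_C, shiftEval, aevalTower_C, aevalTower_C]
    exact transvectionAct_shiftEmbedding F hij α a
  | add P Q hP hQ => rw [map_add, map_add, hP, hQ, map_add, map_add]
  | mul_X P c hP => rw [map_mul, map_mul, hP, shiftEval_X,
      transvectionAct_shiftGen_inl F _ (Fin.succ_ne_zero j), map_mul, map_mul,
      mapAlgHom_apply _ (X c), map_X, shiftEval_X]

theorem shiftEval_mem_generatedAlgebra {P : MvPolynomial (Fin 2) (CoordRing F m)}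
    (hP : ∀ s, coeff s P ∈ generatedAlgebra F m) :
    shiftEval F m P ∈ generatedAlgebra F (m + 1) := by
  have hX (c : Fin 2) : shiftEval F m (X c) ∈ generatedAlgebra F (m + 1) := by
    rw [shiftEval_X]
    fin_cases c
    · change X (Sum.inl 0) ∈ _
      rw [← xVar_zero]
      exact orbitAlgebra_le_generatedAlgebra F _ (orbitX_mem_orbitAlgebra F (m + 1) 0)
    · change uInv F (m + 1) (0 : ℕ) ∈ _
      rw [uInv_natCast]
      exact frobPairing_mem_generatedAlgebra F (m + 1) 0 0
  rw [P.as_sum, map_sum]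
  refine sum_mem fun s _ => ?_
  rw [monomial_eq, map_mul, shiftEval, aevalTower_C, ← shiftEval, Finsupp.prod, map_prod]
  refine mul_mem (shiftEmbedding_mem_generatedAlgebra F m (hP s)) (prod_mem fun c _ => ?_)
  rw [map_pow]
  exact pow_mem (hX c) _

theorem exists_pow_mul_mem_adjoin (p : CoordRing F (m + 1)) :
    ∃ k, X (Sum.inl 0) ^ k * p ∈ Algebra.adjoin F
      (Set.range (shiftGen F m) ∪ Set.range fun i : Fin m => X (Sum.inl i.succ)) := by
  set B := Algebra.adjoin F (Set.range (shiftGen F m) ∪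
    Set.range fun i : Fin m => X (Sum.inl i.succ))
  have hgen (c) : shiftGen F m c ∈ B := Algebra.subset_adjoin (Or.inl ⟨c, rfl⟩)
  have hx0 : X (Sum.inl 0) ∈ B := hgen (Sum.inl 0)
  have hx (i : Fin m) : X (Sum.inl i.succ) ∈ B := Algebra.subset_adjoin (Or.inr ⟨i, rfl⟩)
  have hy (i : Fin m) : X (Sum.inr i.succ) ∈ B :=
    shiftEmbedding_X_inr F m i ▸ hgen (Sum.inr (Sum.inr i))
  have hxy : X (Sum.inl 0) * X (Sum.inr 0) ∈ B := by
    rw [eq_sub_of_add_eq (uInv_zero_eq_add_sum F m).symm]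
    exact sub_mem (hgen (Sum.inl 1)) (sum_mem fun k _ => mul_mem (hx k) (hy k))
  have hsub : (X (Sum.inl 0) : CoordRing F (m + 1)) • Set.range X ⊆
      (B : Set (CoordRing F (m + 1))) := by
    rintro _ ⟨_, ⟨i | i, rfl⟩, rfl⟩ <;> refine Fin.cases ?_ (fun i => ?_) i
    · exact mul_mem hx0 hx0
    · exact mul_mem hx0 (hx i)
    · exact hxy
    · exact mul_mem hx0 (hy i)
  obtain ⟨k, hk⟩ := Algebra.pow_smul_mem_of_smul_subset_of_mem_adjoin _ _ B hsub
    (adjoin_range_X (R := F) ▸ Algebra.mem_top : p ∈ Algebra.adjoin F (Set.range X)) hx0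
  exact ⟨k, hk k le_rfl⟩

theorem mem_adjoin_range_shiftGen_of_invariant {p : CoordRing F (m + 1)}
    (hp : p ∈ Algebra.adjoin F
      (Set.range (shiftGen F m) ∪ Set.range fun i : Fin m => X (Sum.inl i.succ)))
    (hinv : ∀ (i : Fin m) (α : F), transvectionAct i.succ_ne_zero.symm α p = p) :
    p ∈ Algebra.adjoin F (Set.range (shiftGen F m)) := by
  have hfix (i : Fin m) (α : F) (c) :
      transvectionAct i.succ_ne_zero.symm α (shiftGen F m c) = shiftGen F m c := by
    rcases c with c | (j | j)
    · exact transvectionAct_shiftGen_inl F _ i.succ_ne_zero α c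
    · simp only [shiftGen, Sum.elim_inr, shiftEmbedding_X_inl]
      rw [transvectionAct_subspacePoly_one F _ i.succ_ne_zero, transvectionAct_X_inl, map_add,
        add_eq_left]
      split_ifs
      · rw [← smul_eq_C_mul, map_smul, ← xVar_zero, subspacePoly_eq_zero_of_lt _ zero_lt_one,
          smul_zero]
      · exact map_zero _
    · simp only [shiftGen, Sum.elim_inr, shiftEmbedding_X_inr]
      rw [transvectionAct_X_inr, if_neg (Fin.succ_ne_zero j), sub_zero]
  refine mem_adjoin_of_mem_adjoin_union_image_of_invariant (c := X (Sum.inl 0))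
    (φ := fun i α => transvectionAct i.succ_ne_zero.symm α) ⟨Sum.inl 0, rfl⟩ (X_ne_zero _)
    (fun i => ⟨Sum.inr (Sum.inl i), ?_⟩) (fun i α => Set.forall_mem_range.mpr (hfix i α))
    (fun i α => ?_) (fun i j α hji => ?_) Finset.univ
    (by rwa [Finset.coe_univ, Set.image_univ]) hinv
  · rw [← xVar_zero, ← subspacePoly_one]
    exact shiftEmbedding_X_inl F m i
  · rw [transvectionAct_X_inl, if_pos rfl]
    rfl
  · exact transvectionAct_X_inl_of_ne F _ _ α (Fin.succ_injective m |>.ne hji)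

theorem mem_generatedAlgebra_of_transvectionAct_eq_self {p : CoordRing F n}
    (hp : ∀ (i j : Fin n) (hij : i < j) (α : F), transvectionAct hij.ne α p = p) :
    p ∈ generatedAlgebra F n := by
  induction n with
  | zero =>
    rw [eq_C_of_isEmpty p]
    exact Subalgebra.algebraMap_mem _ _
  | succ m ih =>
    obtain ⟨k, hk⟩ := exists_pow_mul_mem_adjoin F p
    have hinv (i j : Fin (m + 1)) (hij : i < j) (α : F) :
        transvectionAct hij.ne α (X (Sum.inl 0) ^ k * p) = X (Sum.inl 0) ^ k * p := by
      rw [map_mul, map_pow, hp i j hij,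
        transvectionAct_X_inl_of_ne F _ _ _ (Fin.ne_zero_of_lt hij).symm]
    have hmem := mem_adjoin_range_shiftGen_of_invariant F hk fun i α => hinv _ _ i.succ_pos α
    rw [← range_shiftEval] at hmem
    obtain ⟨P, hP⟩ := hmem
    have hcoeff (s : Fin 2 →₀ ℕ) : coeff s P ∈ generatedAlgebra F m := by
      refine ih fun i j hij α => ?_
      have hmap : mapAlgHom (transvectionAct hij.ne α) P = P := by
        refine shiftEval_injective F m ?_
        rw [← transvectionAct_shiftEval]
        exact hP ▸ hinv _ _ (Fin.succ_lt_succ_iff.mpr hij) α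
      conv_rhs => rw [← hmap, mapAlgHom_apply, coeff_map]
      rfl
    refine mem_generatedAlgebra_of_xVar_pow_mul_mem F m (k := k) ?_
    rw [xVar_zero, ← hP]
    exact shiftEval_mem_generatedAlgebra F hcoeff

end Descent

/-- Theorem (main, part (a), generation): for `n ≥ 2` the invariant ring
`F_q[V ⊕ V*]^{U_n}` is the `F_q`-subalgebra generated by
`f_1,…,f_n, f_1^*,…,f_n^*, u_{2-n},…,u_{n-2}`. -/
theorem invariantRing_Un_eq_adjoin (hn : 2 ≤ n) (p : MvPolynomial (Fin n ⊕ Fin n) F) :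
    (∀ σ : GL (Fin n) F, isUpperUnipotent F n σ → gact F n σ p = p) ↔
      p ∈ Algebra.adjoin F
        ((Set.range fun i : Fin n => fX F n (i.val + 1)) ∪
          (Set.range fun i : Fin n => fY F n (i.val + 1)) ∪
          (uInv F n '' Set.Icc (2 - (n : ℤ)) ((n : ℤ) - 2))) := by
  exact ⟨fun h => mem_generatedAlgebra_of_transvectionAct_eq_self F n fun i j hij α =>
      h _ (isUpperUnipotent_transvection hij α),
    fun hp σ hσ => gact_eq_self_of_mem_generatedAlgebra hσ hp⟩
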